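/- Let B be a finite Blaschke product of degree d. If for some t ∈ (0,1) the Lebesgue measure of {z ∈ 𝔻 : |B(z)| < t} equals π·t^{2/d}, then a_k = 0 for every k, i.e., B(z) = e^{is}z^d; and in that case equality holds for every t ∈ [0,1]. -/

import Mathlib

/-!
Let `A(x)` be the area of `{|B|² < x}` in the disk. The function `A(x) x^(-1/d)` is monotone, with
value at most `π` at `x = 1`. Equality at one level therefore makes it equal to `π` from there on, which
near the circle forces `B` to be a multiple of `z ^ d`.

Monotonicity. For a profile `e` supported in `[x₁, x₂]`, the function `pot = ∫_{|B|²}^1 e` has compact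
support and `∂̄(pot) = -fld` with `fld = e(|B|²) B conj(B')`. The Cauchy–Pompeiu formula gives
`∫ fld(w) / (w - z) dw = π pot(z)`, and `pot` is constant, equal to `∫ e`, on the sublevel set
`E = {|B|² < x₁}`. Integrating over `z ∈ E` and bounding the Cauchy transform of `E` by
`√(π |E|)` (Ahlfors–Beurling, `ahlfors_beurling`) leaves `∫ |fld|`. Since `B'/B` has its poles at the
zeros of `B` and at their reflections outside the disk, the same formula yields
`∫ e(|B|²) |B'|² = π d ∫ e` (`energy`). With AM–GM this gives
`A(x₁) ∫ e ≤ d |{x₁ ≤ |B|² < x₂}|` when `x e(x) ≤ 1` (`flux_ineq`), and letting `e` tend to `1/x`,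
`A(x₁) log(x₂/x₁) ≤ d (A(x₂) - A(x₁))` (`area_growth`), whose integrated form is the monotonicity
(`area_monotone`).

Rigidity. Under equality at a level, the shells `{x ≤ |B|² < 1}` above it have area at most
`(π/d) log(1/x)` (`superlevel_le`). Expanding `|1/w - B'/(d B)|²` against the weight `x e(x)` of a
shell `{1 - δ ≤ |B|² < 1}`, the cross term and the last term are exactly computable, and the area
bound makes the total `O(δ²)` (`shell_upper`). The shell has width of order `δ`, so this quantity
vanishes on the unit circle (`defect_circle`). Hence `w B' = d B` on the circle, and on the disk by
the maximum principle. Then `B(r w) = r^d B(w)` along rays; since `|B| = 1` on the circle, `B` has no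
zero other than the origin (`zeros_eq_zero`).
-/

open MeasureTheory Complex ComplexConjugate

/-! ### The Cauchy–Pompeiu formula -/

/-- The Cauchy–Pompeiu formula for compactly supported `Ψ`; the numerator is `2 ∂̄Ψ`. In polar
coordinates around `z` the integrand is the radial derivative of `Ψ`, which integrates to `-Ψ z`
along each ray, plus a multiple of the angular derivative, which integrates to `0` on each circle. -/
theorem cauchy_pompeiu (Ψ : ℂ → ℂ) (hΨ : ContDiff ℝ 1 Ψ) (hc : HasCompactSupport Ψ) (z : ℂ) :
    ∫ w, (fderiv ℝ Ψ w 1 + I * fderiv ℝ Ψ w I) / (w - z) = -2 * Real.pi * Ψ z := by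
  obtain ⟨R, hR0, hR⟩ : ∃ R : ℝ, 0 < R ∧ ∀ w, R < ‖w‖ → fderiv ℝ Ψ (w + z) = 0 := by
    obtain ⟨R, hR⟩ := (hc.fderiv (𝕜 := ℝ)).isCompact.isBounded.subset_closedBall z
    refine ⟨max R 1, by positivity, fun w hw => ?_⟩
    by_contra h
    have := hR (subset_tsupport _ h)
    rw [mem_closedBall_iff_norm] at this
    simp only [add_sub_cancel_right] at this
    exact absurd (lt_of_le_of_lt (le_max_left _ _) hw) (not_lt.2 this)
  have hdc : Continuous (fderiv ℝ Ψ) := hΨ.continuous_fderiv one_ne_zero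
  let E : ℝ → ℂ := fun θ => Real.cos θ + Real.sin θ * I
  have hE : Continuous E := by fun_prop
  have hEn : ∀ θ, ‖E θ‖ = 1 := fun θ => by
    simp only [E]
    push_cast
    rw [← Complex.exp_mul_I, Complex.norm_exp_ofReal_mul_I]
  have hEE : ∀ θ, HasDerivAt E (I * E θ) θ := fun θ => by
    have h1 : HasDerivAt (fun θ : ℝ => Complex.exp (θ * I)) (Complex.exp (θ * I) * (1 * I)) θ :=
      HasDerivAt.cexp ((Complex.ofRealCLM.hasDerivAt (x := θ)).mul_const I)
    convert h1 using 1
    · ext θ; simp only [E]; push_cast; rw [← Complex.exp_mul_I]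
    · simp only [E]; push_cast; rw [← Complex.exp_mul_I]; ring
  -- `T1` is the radial derivative of `Ψ`, and `T2` its angular derivative divided by `ρ`.
  let T1 : ℝ × ℝ → ℂ := fun p => fderiv ℝ Ψ (p.1 * E p.2 + z) (E p.2)
  let T2 : ℝ × ℝ → ℂ := fun p => fderiv ℝ Ψ (p.1 * E p.2 + z) (I * E p.2)
  have hT1 : Continuous T1 := by
    refine Continuous.clm_apply (hdc.comp (by fun_prop)) (by fun_prop)
  have hT2 : Continuous T2 := by
    refine Continuous.clm_apply (hdc.comp (by fun_prop)) (by fun_prop)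
  have hz : ∀ p : ℝ × ℝ, R < p.1 → fderiv ℝ Ψ (p.1 * E p.2 + z) = 0 := fun p hp => by
    apply hR
    rw [norm_mul, hEn, mul_one, Complex.norm_real, Real.norm_eq_abs]
    exact lt_of_lt_of_le hp (le_abs_self _)
  have hint : ∀ T : ℝ × ℝ → ℂ, Continuous T → (∀ p : ℝ × ℝ, R < p.1 → T p = 0) →
      IntegrableOn T (Set.Ioi (0 : ℝ) ×ˢ Set.Ioo (-Real.pi) Real.pi) := fun T hT hT0 => by
    have h1 : IntegrableOn T (Set.Icc 0 R ×ˢ Set.Icc (-Real.pi) Real.pi) :=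
      hT.continuousOn.integrableOn_compact (isCompact_Icc.prod isCompact_Icc)
    refine h1.of_forall_sdiff_eq_zero (measurableSet_Ioi.prod measurableSet_Ioo) ?_
    rintro ⟨ρ, θ⟩ ⟨⟨h1, h2⟩, h3⟩
    apply hT0
    by_contra h
    exact h3 ⟨⟨le_of_lt h1, not_lt.1 h⟩, ⟨h2.1.le, h2.2.le⟩⟩
  have i1 := hint T1 hT1 (fun p hp => by simp [T1, hz p hp])
  have i2 := hint T2 hT2 (fun p hp => by simp [T2, hz p hp])
  have e1 : ∫ p in Set.Ioi (0 : ℝ) ×ˢ Set.Ioo (-Real.pi) Real.pi, T1 p = -2 * Real.pi * Ψ z := by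
    rw [Measure.volume_eq_prod, ← Measure.prod_restrict, integral_prod_symm]
    · have : ∀ θ : ℝ, ∫ ρ in Set.Ioi (0 : ℝ), T1 (ρ, θ) = - Ψ z := fun θ => by
        have hd : ∀ ρ : ℝ, HasDerivAt (fun ρ : ℝ => Ψ (ρ * E θ + z)) (T1 (ρ, θ)) ρ := fun ρ => by
          have h1 : HasDerivAt (fun ρ : ℝ => (ρ : ℂ) * E θ + z) (E θ) ρ := by
            simpa using ((Complex.ofRealCLM.hasDerivAt (x := ρ)).mul_const (E θ)).add_const z
          exact ((hΨ.differentiable one_ne_zero _).hasFDerivAt).comp_hasDerivAt ρ h1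
        have := integral_Ioi_of_hasDerivAt_of_tendsto' (a := (0 : ℝ)) (m := 0)
          (fun x _ => hd x) ?_ ?_
        · rw [this]; simp
        · have h1 : IntegrableOn (fun ρ : ℝ => T1 (ρ, θ)) (Set.Icc 0 R) := by
            apply Continuous.integrableOn_Icc
            fun_prop
          refine h1.of_forall_sdiff_eq_zero measurableSet_Ioi ?_
          rintro ρ ⟨h1, h3⟩
          have : R < ρ := by
            by_contra h
            exact h3 ⟨le_of_lt h1, not_lt.1 h⟩
          simp [T1, hz (ρ, θ) this]
        · obtain ⟨R', hR'⟩ := hc.isCompact.isBounded.subset_closedBall z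
          refine tendsto_const_nhds.congr' ?_
          filter_upwards [Filter.eventually_gt_atTop R', Filter.eventually_gt_atTop 0] with ρ h1 h2
          by_contra h
          have := hR' (subset_tsupport _ (Ne.symm h))
          rw [mem_closedBall_iff_norm, add_sub_cancel_right, norm_mul, hEn, mul_one,
            Complex.norm_real, Real.norm_eq_abs, abs_of_pos h2] at this
          linarith
      simp_rw [this]
      rw [setIntegral_const]
      simp [Real.pi_pos.le, measureReal_def]
      left; ring
    · rw [Measure.prod_restrict]; exact i1
  have e2 : ∫ p in Set.Ioi (0 : ℝ) ×ˢ Set.Ioo (-Real.pi) Real.pi, T2 p = 0 := by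
    rw [Measure.volume_eq_prod, setIntegral_prod _ i2]
    apply setIntegral_eq_zero_of_forall_eq_zero
    intro ρ hρ
    have hρ' : (ρ : ℂ) ≠ 0 := by exact_mod_cast (ne_of_gt hρ)
    have hd : ∀ θ : ℝ, HasDerivAt (fun θ : ℝ => (ρ : ℂ)⁻¹ * Ψ (ρ * E θ + z)) (T2 (ρ, θ)) θ :=
      fun θ => by
        have h1 : HasDerivAt (fun θ : ℝ => (ρ : ℂ) * E θ + z) ((ρ : ℂ) * (I * E θ)) θ :=
          ((hEE θ).const_mul _).add_const z
        have h2 := ((hΨ.differentiable one_ne_zero _).hasFDerivAt (x := ρ * E θ + z)).comp_hasDerivAt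
          θ h1
        have h3 := h2.const_mul (ρ : ℂ)⁻¹
        refine h3.congr_deriv ?_
        have : (ρ : ℂ) * (I * E θ) = ρ • (I * E θ) := by simp
        rw [this, map_smul, Complex.real_smul, inv_mul_cancel_left₀ hρ']
    rw [← integral_Ioc_eq_integral_Ioo, ← intervalIntegral.integral_of_le (by linarith [Real.pi_pos]),
      intervalIntegral.integral_eq_sub_of_hasDerivAt (fun θ _ => hd θ)
        (Continuous.intervalIntegrable (by fun_prop) _ _)]
    simp [E]
  rw [← integral_add_right_eq_self _ z, ← Complex.integral_comp_polarCoord_symm,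
    polarCoord_target]
  have : ∀ p ∈ Set.Ioi (0 : ℝ) ×ˢ Set.Ioo (-Real.pi) Real.pi,
      p.1 • ((fderiv ℝ Ψ (Complex.polarCoord.symm p + z) 1 +
        I * fderiv ℝ Ψ (Complex.polarCoord.symm p + z) I) / (Complex.polarCoord.symm p + z - z))
        = T1 p + I * T2 p := by
    rintro p ⟨hp, -⟩
    have hρ' : (p.1 : ℂ) ≠ 0 := by exact_mod_cast (ne_of_gt hp)
    rw [Complex.polarCoord_symm_apply, add_sub_cancel_right]
    change p.1 • ((fderiv ℝ Ψ (p.1 * E p.2 + z) 1 + I * fderiv ℝ Ψ (p.1 * E p.2 + z) I) /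
      (p.1 * E p.2)) = _
    simp only [T1, T2]
    set D := fderiv ℝ Ψ (p.1 * E p.2 + z)
    have h1 : D (E p.2) = Real.cos p.2 * D 1 + Real.sin p.2 * D I := by
      have : E p.2 = Real.cos p.2 • (1 : ℂ) + Real.sin p.2 • I := by simp [E]
      rw [this, map_add, map_smul, map_smul]; simp
    have h2 : D (I * E p.2) = - Real.sin p.2 * D 1 + Real.cos p.2 * D I := by
      have : I * E p.2 = (- Real.sin p.2) • (1 : ℂ) + Real.cos p.2 • I := by
        simp [E, mul_add]
        linear_combination Complex.sin p.2 * Complex.I_mul_I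
      rw [this, map_add, map_smul, map_smul]; simp
    rw [h1, h2, Complex.real_smul]
    have hE0 : E p.2 ≠ 0 := by
      rw [← norm_pos_iff, hEn]; norm_num
    rw [mul_div_assoc', mul_div_mul_left _ _ hρ', div_eq_iff hE0]
    simp only [E]
    have hcs : (Real.cos p.2 : ℂ) ^ 2 + (Real.sin p.2 : ℂ) ^ 2 = 1 := by
      exact_mod_cast Real.cos_sq_add_sin_sq p.2
    linear_combination (- (D 1 + I * D I)) * hcs +
      (Real.sin p.2 ^ 2 * D 1 - Real.sin p.2 * Real.cos p.2 * D I) * Complex.I_sq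
  rw [setIntegral_congr_fun (measurableSet_Ioi.prod measurableSet_Ioo) this]
  rw [integral_add i1 (i2.const_mul I), e1, integral_const_mul, e2]
  simp

/-! ### The Ahlfors–Beurling inequality -/

/-- The kernel `1 / (w - z)` is integrable on sets of finite area, uniformly in `w`. -/
theorem lintegral_inv_sub_le : ∃ C : ENNReal, C ≠ ⊤ ∧ ∀ (w : ℂ) (E : Set ℂ),
    ∫⁻ z in E, ‖(w - z)⁻¹‖ₑ ≤ volume E + C := by
  have h1 : IntegrableOn (fun y : ℂ => ‖y‖⁻¹) (Metric.ball 0 1) := by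
    rw [integrableOn_fun_norm_addHaar volume (f := fun x : ℝ => x⁻¹)]
    have : IntegrableOn (fun _ : ℝ => (1 : ℝ)) (Set.Ioo 0 1) := by
      simp
    refine this.congr_fun (fun x hx => ?_) measurableSet_Ioo
    have := hx.1.ne'
    simp [Complex.finrank_real_complex, this]
  refine ⟨∫⁻ y in Metric.ball (0 : ℂ) 1, ‖‖y‖⁻¹‖ₑ, h1.2.ne, fun w E => ?_⟩
  calc ∫⁻ z in E, ‖(w - z)⁻¹‖ₑ
      ≤ ∫⁻ z in E, (1 + (Metric.ball (0 : ℂ) 1).indicator (fun y => ‖‖y‖⁻¹‖ₑ) (w - z)) := by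
        refine lintegral_mono fun z => ?_
        by_cases hz : w - z ∈ Metric.ball (0 : ℂ) 1
        · simp only [Set.indicator_of_mem hz]
          rw [← norm_inv, enorm_norm]
          exact le_add_self
        · refine le_trans ?_ le_self_add
          rw [mem_ball_zero_iff, not_lt] at hz
          rw [← ofReal_norm, ENNReal.ofReal_le_one, norm_inv]
          exact inv_le_one_of_one_le₀ hz
    _ = volume E + ∫⁻ z in E, (Metric.ball (0 : ℂ) 1).indicator (fun y => ‖‖y‖⁻¹‖ₑ) (w - z) := by
        rw [lintegral_add_left measurable_const]; simp
    _ ≤ _ := by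
        refine add_le_add le_rfl ((setLIntegral_le_lintegral _ _).trans ?_)
        rw [lintegral_sub_left_eq_self (fun y => (Metric.ball (0 : ℂ) 1).indicator (fun y => ‖‖y‖⁻¹‖ₑ) y) w, lintegral_indicator Metric.isOpen_ball.measurableSet]

theorem integrableOn_inv_sub (w : ℂ) (E : Set ℂ) (hE : volume E ≠ ⊤) :
    IntegrableOn (fun z => (w - z)⁻¹) E := by
  obtain ⟨C, hC, h⟩ := lintegral_inv_sub_le
  exact ⟨by fun_prop, lt_of_le_of_lt (h w E) (ENNReal.add_lt_top.2 ⟨hE.lt_top, hC.lt_top⟩)⟩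

/-- The set `{Re (1/y) > 1/(2R)}` is a disc of radius `R` through the origin. It is extremal in the
Ahlfors–Beurling inequality; this is the corresponding excess integral in polar coordinates. -/
theorem lintegral_re_inv_sub_le (R : ℝ) (hR : 0 < R) :
    ∫⁻ y : ℂ, ENNReal.ofReal ((y⁻¹).re - 1 / (2 * R)) ≤ ENNReal.ofReal (Real.pi * R / 2) := by
  rw [← Complex.lintegral_comp_polarCoord_symm, polarCoord_target]
  have h1 : ∀ p ∈ Set.Ioi (0 : ℝ) ×ˢ Set.Ioo (-Real.pi) Real.pi,
      ENNReal.ofReal p.1 • ENNReal.ofReal (((Complex.polarCoord.symm p)⁻¹).re - 1 / (2 * R)) =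
      ENNReal.ofReal (Real.cos p.2 - p.1 / (2 * R)) := by
    rintro p ⟨hp, -⟩
    have hp' : (0 : ℝ) < p.1 := hp
    rw [Complex.polarCoord_symm_apply, smul_eq_mul, ← ENNReal.ofReal_mul hp'.le]
    congr 1
    have : ((p.1 : ℂ) * (Real.cos p.2 + Real.sin p.2 * I))⁻¹ =
        (p.1⁻¹ : ℝ) * (Real.cos p.2 - Real.sin p.2 * I) := by
      have h2 : ((Real.cos p.2 : ℂ) + Real.sin p.2 * I) * (Real.cos p.2 - Real.sin p.2 * I) = 1 := by
        have : (Real.cos p.2 : ℂ) ^ 2 + (Real.sin p.2 : ℂ) ^ 2 = 1 := by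
          exact_mod_cast Real.cos_sq_add_sin_sq p.2
        linear_combination this - (Real.sin p.2 : ℂ) ^ 2 * Complex.I_sq
      rw [mul_inv, eq_comm, Complex.ofReal_inv, inv_eq_of_mul_eq_one_right h2]
    rw [this, Complex.re_ofReal_mul]
    simp only [sub_re, ofReal_re, mul_re, I_re, I_im, ofReal_im]
    field_simp
    ring
  rw [setLIntegral_congr_fun (measurableSet_Ioi.prod measurableSet_Ioo) h1,
    Measure.volume_eq_prod, ← Measure.prod_restrict,
    lintegral_prod_symm _ (by fun_prop)]
  have h2 : ∀ θ ∈ Set.Ioo (-Real.pi) Real.pi,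
      ∫⁻ ρ in Set.Ioi (0 : ℝ), ENNReal.ofReal (Real.cos θ - ρ / (2 * R)) ≤
      (Set.Ioc (-(Real.pi / 2)) (Real.pi / 2)).indicator
        (fun θ => ENNReal.ofReal (R * Real.cos θ ^ 2)) θ := by
    intro θ hθ
    by_cases hc : 0 < Real.cos θ
    · have hm : θ ∈ Set.Ioc (-(Real.pi / 2)) (Real.pi / 2) := by
        constructor
        · by_contra h
          have := Real.cos_nonpos_of_pi_div_two_le_of_le (x := -θ) (by linarith)
            (by linarith [hθ.1, Real.pi_pos])
          rw [Real.cos_neg] at this; linarith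
        · by_contra h
          have := Real.cos_nonpos_of_pi_div_two_le_of_le (x := θ) (by linarith)
            (by linarith [hθ.2, Real.pi_pos])
          linarith
      rw [Set.indicator_of_mem hm]
      have hb : 0 ≤ 2 * R * Real.cos θ := by positivity
      calc ∫⁻ ρ in Set.Ioi (0 : ℝ), ENNReal.ofReal (Real.cos θ - ρ / (2 * R))
          ≤ ∫⁻ ρ in Set.Ioc (0 : ℝ) (2 * R * Real.cos θ),
            ENNReal.ofReal (Real.cos θ - ρ / (2 * R)) := by
            rw [← lintegral_indicator measurableSet_Ioc]
            refine (setLIntegral_mono' measurableSet_Ioi fun x hx => ?_).trans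
              (setLIntegral_le_lintegral (Set.Ioi 0) _)
            by_cases hx2 : x ≤ 2 * R * Real.cos θ
            · rw [Set.indicator_of_mem (show x ∈ Set.Ioc _ _ from ⟨hx, hx2⟩)]
            · refine le_trans (le_of_eq ?_) zero_le
              apply ENNReal.ofReal_of_nonpos
              rw [sub_nonpos, le_div_iff₀ (by positivity)]
              linarith
        _ = ENNReal.ofReal (∫ ρ in (0 : ℝ)..(2 * R * Real.cos θ), (Real.cos θ - ρ / (2 * R))) := by
            rw [intervalIntegral.integral_of_le hb, ofReal_integral_eq_lintegral_ofReal]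
            · exact (Continuous.integrableOn_Icc (by fun_prop)).mono_set Set.Ioc_subset_Icc_self
            · filter_upwards [ae_restrict_mem measurableSet_Ioc] with x hx
              have := hx.2
              simp only [Pi.zero_apply]
              rw [sub_nonneg, div_le_iff₀ (by positivity)]
              linarith
        _ ≤ _ := by
            apply le_of_eq
            congr 1
            rw [intervalIntegral.integral_sub (by simp) (Continuous.intervalIntegrable (by fun_prop) _ _),
              intervalIntegral.integral_div, integral_id]
            simp
            field_simp
            ring
    · refine le_trans (le_of_eq ?_) zero_le
      rw [setLIntegral_congr_fun (g := fun _ => 0) measurableSet_Ioi, lintegral_zero]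
      intro x hx
      apply ENNReal.ofReal_of_nonpos
      have : 0 ≤ x / (2 * R) := div_nonneg (le_of_lt hx) (by positivity)
      linarith
  refine (setLIntegral_mono' measurableSet_Ioo h2).trans ?_
  refine (setLIntegral_le_lintegral _ _).trans ?_
  rw [lintegral_indicator measurableSet_Ioc, ← ofReal_integral_eq_lintegral_ofReal,
    ← intervalIntegral.integral_of_le (by linarith [Real.pi_pos]),
    intervalIntegral.integral_const_mul, integral_cos_sq]
  · apply ENNReal.ofReal_le_ofReal
    simp
    apply le_of_eq; ring
  · exact (Continuous.integrableOn_Icc (by fun_prop)).mono_set Set.Ioc_subset_Icc_self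
  · exact Filter.Eventually.of_forall fun x => by simp; positivity

/-- The Ahlfors–Beurling inequality. After a rotation the left side is the integral of
`Re (1/(w - z))` over `E`. It is at most `|E| / (2R)` plus the integral of the positive part of
`Re (1/y) - 1/(2R)` over the whole plane, for every `R > 0`. -/
theorem ahlfors_beurling (w : ℂ) (E : Set ℂ) (hE : volume E ≠ ⊤) :
    ‖∫ z in E, (w - z)⁻¹‖ ≤ Real.sqrt (Real.pi * (volume E).toReal) := by
  have hint := integrableOn_inv_sub w E hE
  set m := (volume E).toReal with hm
  have hm0 : 0 ≤ m := ENNReal.toReal_nonneg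
  have key : ∀ R : ℝ, 0 < R → ‖∫ z in E, (w - z)⁻¹‖ ≤ m / (2 * R) + Real.pi * R / 2 := by
    intro R hR
    obtain ⟨c, hc, hcn⟩ : ∃ c : ℂ, ‖c‖ = 1 ∧
        (‖∫ z in E, (w - z)⁻¹‖ : ℂ) = c * ∫ z in E, (w - z)⁻¹ := by
      set v := ∫ z in E, (w - z)⁻¹
      by_cases hv : v = 0
      · exact ⟨1, by simp, by simp [hv]⟩
      · have : ‖v‖ ≠ 0 := by simpa using hv
        refine ⟨(‖v‖ : ℂ) / v, by simp [this], ?_⟩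
        field_simp
    have e1 : ‖∫ z in E, (w - z)⁻¹‖ = ∫ z in E, (c * (w - z)⁻¹).re := by
      have : ((‖∫ z in E, (w - z)⁻¹‖ : ℂ)).re = (∫ z in E, c * (w - z)⁻¹).re := by
        rw [hcn, integral_const_mul]
      rw [Complex.ofReal_re] at this
      rw [this]
      exact (Complex.reCLM.integral_comp_comm (hint.const_mul c)).symm
    have i1 : IntegrableOn (fun z => (c * (w - z)⁻¹).re) E :=
      Complex.reCLM.integrable_comp (hint.const_mul c)
    have i2 : IntegrableOn (fun _ : ℂ => 1 / (2 * R)) E :=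
      integrableOn_const hE
    have e2 : ∫ z in E, (c * (w - z)⁻¹).re =
        m / (2 * R) + ∫ z in E, ((c * (w - z)⁻¹).re - 1 / (2 * R)) := by
      rw [integral_sub i1 i2, setIntegral_const]
      simp only [measureReal_def, smul_eq_mul, ← hm]
      ring
    rw [e1, e2]
    gcongr
    have i3 : IntegrableOn (fun z => (c * (w - z)⁻¹).re - 1 / (2 * R)) E := i1.sub i2
    rw [integral_eq_lintegral_pos_part_sub_lintegral_neg_part i3]
    refine (sub_le_self _ ENNReal.toReal_nonneg).trans ?_
    apply ENNReal.toReal_le_of_le_ofReal (by positivity)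
    refine le_trans ?_ (lintegral_re_inv_sub_le R hR)
    refine (setLIntegral_le_lintegral _ _).trans ?_
    have hc0 : c ≠ 0 := by rw [← norm_pos_iff, hc]; norm_num
    let cc : Circle := ⟨c⁻¹, by simp [Submonoid.unitSphere, hc]⟩
    have hmp := (rotation cc).measurePreserving
    have s1 := lintegral_sub_left_eq_self (μ := (volume : Measure ℂ))
      (fun y => ENNReal.ofReal ((rotation cc y)⁻¹.re - 1 / (2 * R))) w
    have s2 := hmp.lintegral_comp_emb (rotation cc).toHomeomorph.measurableEmbedding
      (fun y => ENNReal.ofReal (y⁻¹.re - 1 / (2 * R)))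
    rw [← s2, ← s1]
    refine le_of_eq (lintegral_congr fun z => ?_)
    rw [rotation_apply]
    simp only [cc, mul_inv, inv_inv]
  by_cases h0 : m = 0
  · have : volume E = 0 := by
      rcases (ENNReal.toReal_eq_zero_iff _).1 (hm ▸ h0) with h | h
      · exact h
      · exact absurd h hE
    rw [Measure.restrict_eq_zero.2 this]; simp
  have hmp : 0 < m := lt_of_le_of_ne hm0 (Ne.symm h0)
  -- This radius minimises `m / (2R) + πR / 2`; the disc of radius `R` then has area `m`.
  have := key (Real.sqrt (m / Real.pi)) (by positivity)
  refine this.trans (le_of_eq ?_)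
  have h3 : 0 < Real.sqrt (m / Real.pi) := by positivity
  have h2 := Real.sq_sqrt (show 0 ≤ m / Real.pi by positivity)
  have hm2 : m = Real.pi * Real.sqrt (m / Real.pi) ^ 2 := by rw [h2]; field_simp
  set r := Real.sqrt (m / Real.pi)
  have hs : Real.sqrt (Real.pi * m) = Real.pi * r := by
    rw [hm2, show Real.pi * (Real.pi * r ^ 2) = (Real.pi * r) ^ 2 by ring,
      Real.sqrt_sq (by positivity)]
  rw [hs, hm2]
  field_simp
  ring

/-! ### Finite Blaschke products -/

/-- The finite Blaschke product with unimodular factor `e^{is}` and zeros `a k`. -/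
noncomputable def bl {d : ℕ} (s : ℝ) (a : Fin d → ℂ) (z : ℂ) : ℂ :=
  Complex.exp (Complex.I * s) * ∏ k, (z - a k) / (1 - z * conj (a k))

theorem den_ne {a w : ℂ} (ha : ‖a‖ < 1) (hw : ‖w‖ ≤ 1) : 1 - w * conj a ≠ 0 := by
  intro h
  have h1 : ‖w * conj a‖ < 1 := by
    rw [norm_mul, Complex.norm_conj]
    nlinarith [norm_nonneg a, norm_nonneg w]
  rw [← sub_eq_zero.1 h] at h1
  simp at h1

theorem normSq_id (a w : ℂ) :
    ‖1 - w * conj a‖ ^ 2 - ‖w - a‖ ^ 2 = (1 - ‖a‖ ^ 2) * (1 - ‖w‖ ^ 2) := by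
  simp only [← Complex.normSq_eq_norm_sq, Complex.normSq_apply]
  simp
  ring

theorem factor_id {a w : ℂ} (ha : ‖a‖ < 1) (hw : ‖w‖ ≤ 1) :
    1 - ‖(w - a) / (1 - w * conj a)‖ ^ 2 =
      (1 - ‖a‖ ^ 2) * (1 - ‖w‖ ^ 2) / ‖1 - w * conj a‖ ^ 2 := by
  have h : ‖1 - w * conj a‖ ≠ 0 := by simpa using den_ne ha hw
  rw [norm_div, ← normSq_id]
  field_simp

theorem factor_le_one {a w : ℂ} (ha : ‖a‖ < 1) (hw : ‖w‖ ≤ 1) :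
    ‖(w - a) / (1 - w * conj a)‖ ^ 2 ≤ 1 := by
  have h := factor_id ha hw
  have : 0 ≤ (1 - ‖a‖ ^ 2) * (1 - ‖w‖ ^ 2) / ‖1 - w * conj a‖ ^ 2 := by
    have h1 : 0 ≤ 1 - ‖a‖ ^ 2 := by nlinarith [norm_nonneg a]
    have h2 : 0 ≤ 1 - ‖w‖ ^ 2 := by nlinarith [norm_nonneg w]
    positivity
  linarith

theorem bl_normSq {d : ℕ} (s : ℝ) (a : Fin d → ℂ) (w : ℂ) :
    ‖bl s a w‖ ^ 2 = ∏ k, ‖(w - a k) / (1 - w * conj (a k))‖ ^ 2 := by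
  rw [bl, norm_mul, mul_comm Complex.I, Complex.norm_exp_ofReal_mul_I, one_mul, norm_prod,
    Finset.prod_pow]

theorem bl_circle {d : ℕ} (s : ℝ) {a : Fin d → ℂ} (ha : ∀ k, ‖a k‖ < 1) {w : ℂ} (hw : ‖w‖ = 1) :
    ‖bl s a w‖ ^ 2 = 1 := by
  rw [bl_normSq]
  apply Finset.prod_eq_one
  intro k _
  have := factor_id (ha k) hw.le
  rw [hw] at this
  simp only [one_pow, sub_self, mul_zero, zero_div] at this
  linarith

/-- `1 - |B|²` is at least of order `1 - |w|`: one Blaschke factor suffices, since all have modulus at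
most `1`. -/
theorem bl_upper {d : ℕ} (hd : 0 < d) (s : ℝ) {a : Fin d → ℂ} (ha : ∀ k, ‖a k‖ < 1) :
    ∃ c : ℝ, 0 < c ∧ c ≤ 1 ∧ ∀ w : ℂ, ‖w‖ < 1 → ‖bl s a w‖ ^ 2 ≤ 1 - c * (1 - ‖w‖) := by
  let k0 : Fin d := ⟨0, hd⟩
  have hk := ha k0
  have hk0 := norm_nonneg (a k0)
  refine ⟨(1 - ‖a k0‖ ^ 2) / 4, by nlinarith, by nlinarith, fun w hw => ?_⟩
  have h1 : ‖bl s a w‖ ^ 2 ≤ ‖(w - a k0) / (1 - w * conj (a k0))‖ ^ 2 := by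
    rw [bl_normSq, ← Finset.mul_prod_erase _ _ (Finset.mem_univ k0)]
    apply mul_le_of_le_one_right (by positivity)
    exact Finset.prod_le_one (fun _ _ => by positivity) (fun k _ => factor_le_one (ha k) hw.le)
  have h2 := factor_id hk hw.le
  have h3 : ‖1 - w * conj (a k0)‖ ≤ 2 := by
    refine (norm_sub_le _ _).trans ?_
    rw [norm_mul, Complex.norm_conj, norm_one]
    nlinarith [norm_nonneg w]
  have h4 : 0 < ‖1 - w * conj (a k0)‖ := norm_pos_iff.2 (den_ne hk hw.le)
  have h5 : (1 - ‖a k0‖ ^ 2) * (1 - ‖w‖ ^ 2) / 4 ≤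
      (1 - ‖a k0‖ ^ 2) * (1 - ‖w‖ ^ 2) / ‖1 - w * conj (a k0)‖ ^ 2 := by
    have h1 : 0 ≤ 1 - ‖a k0‖ ^ 2 := by nlinarith
    have h2 : 0 ≤ 1 - ‖w‖ ^ 2 := by nlinarith [norm_nonneg w]
    gcongr
    nlinarith
  have h6 : (1 - ‖a k0‖ ^ 2) * (1 - ‖w‖) ≤ (1 - ‖a k0‖ ^ 2) * (1 - ‖w‖ ^ 2) := by
    have h1 : 0 ≤ 1 - ‖a k0‖ ^ 2 := by nlinarith
    gcongr
    nlinarith [norm_nonneg w]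
  linarith

/-- The Weierstrass product inequality. -/
theorem one_sub_prod_le {ι : Type*} (S : Finset ι) (f : ι → ℝ) (h0 : ∀ i, 0 ≤ f i)
    (h1 : ∀ i, f i ≤ 1) : 1 - ∑ i ∈ S, (1 - f i) ≤ ∏ i ∈ S, f i := by
  classical
  induction S using Finset.induction_on with
  | empty => simp
  | insert i S hi ih =>
    rw [Finset.sum_insert hi, Finset.prod_insert hi]
    have h2 : ∏ i ∈ S, f i ≤ 1 := Finset.prod_le_one (fun i _ => h0 i) (fun i _ => h1 i)
    nlinarith [h0 i, h1 i]

/-- `1 - |B|²` is at most of order `1 - |w|`. -/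
theorem bl_lower {d : ℕ} (s : ℝ) {a : Fin d → ℂ} (ha : ∀ k, ‖a k‖ < 1) :
    ∃ C : ℝ, 1 ≤ C ∧ ∀ w : ℂ, ‖w‖ < 1 → 1 - C * (1 - ‖w‖) ≤ ‖bl s a w‖ ^ 2 := by
  refine ⟨1 + ∑ k, 2 / (1 - ‖a k‖) ^ 2, ?_, fun w hw => ?_⟩
  · have : 0 ≤ ∑ k, 2 / (1 - ‖a k‖) ^ 2 := Finset.sum_nonneg fun k _ => by positivity
    linarith
  · have h1 := one_sub_prod_le Finset.univ (fun k => ‖(w - a k) / (1 - w * conj (a k))‖ ^ 2)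
      (fun _ => by positivity) (fun k => factor_le_one (ha k) hw.le)
    rw [← bl_normSq s] at h1
    refine le_trans ?_ h1
    have h2 : ∑ k, (1 - ‖(w - a k) / (1 - w * conj (a k))‖ ^ 2) ≤
        ∑ k, 2 / (1 - ‖a k‖) ^ 2 * (1 - ‖w‖) := by
      apply Finset.sum_le_sum
      intro k _
      rw [factor_id (ha k) hw.le]
      have hk := ha k
      have hk0 := norm_nonneg (a k)
      have hw0 := norm_nonneg w
      have h3 : 1 - ‖a k‖ ≤ ‖1 - w * conj (a k)‖ := by
        have := norm_sub_norm_le (1 : ℂ) (w * conj (a k))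
        rw [norm_mul, Complex.norm_conj, norm_one] at this
        nlinarith
      have h4 : 0 < 1 - ‖a k‖ := by linarith
      rw [div_mul_eq_mul_div]
      apply div_le_div₀ (by nlinarith) _ (by positivity) (by gcongr)
      have h5 : 1 - ‖w‖ ^ 2 ≤ 2 * (1 - ‖w‖) := by nlinarith
      have h6 : 1 - ‖a k‖ ^ 2 ≤ 1 := by nlinarith
      have h7 : 0 ≤ 1 - ‖w‖ ^ 2 := by nlinarith
      nlinarith
    rw [← Finset.sum_mul] at h2
    nlinarith

theorem bl_analyticAt {d : ℕ} (s : ℝ) {a : Fin d → ℂ} (ha : ∀ k, ‖a k‖ < 1) {w : ℂ}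
    (hw : ‖w‖ ≤ 1) : AnalyticAt ℂ (bl s a) w := by
  unfold bl
  refine analyticAt_const.mul ?_
  refine Finset.analyticAt_fun_prod _ fun k _ => ?_
  exact (analyticAt_id.sub analyticAt_const).div
    (analyticAt_const.sub (analyticAt_id.mul analyticAt_const)) (den_ne (ha k) hw)

/-- The partial fraction expansion of `B'/B`, cleared of the denominator `B`; its poles are the
zeros `a k` in the disk and the reflected points `1 / conj (a k)` outside it. -/
theorem bl_logDeriv {d : ℕ} (s : ℝ) {a : Fin d → ℂ} (ha : ∀ k, ‖a k‖ < 1) {w : ℂ}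
    (hw : ‖w‖ ≤ 1) (hB : bl s a w ≠ 0) :
    deriv (bl s a) w = bl s a w *
      ∑ k, ((w - a k)⁻¹ + conj (a k) * (1 - w * conj (a k))⁻¹) := by
  have hne : ∀ k, w - a k ≠ 0 := fun k h => by
    apply hB
    rw [bl, Finset.prod_eq_zero (Finset.mem_univ k) (by rw [h, zero_div]), mul_zero]
  have h1 : logDeriv (bl s a) w =
      ∑ k, ((w - a k)⁻¹ + conj (a k) * (1 - w * conj (a k))⁻¹) := by
    unfold bl
    rw [logDeriv_const_mul _ _ (Complex.exp_ne_zero _), logDeriv_prod]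
    · refine Finset.sum_congr rfl fun k _ => ?_
      have h2 := den_ne (ha k) hw
      have h3 : HasDerivAt (fun z => (z - a k) / (1 - z * conj (a k)))
          ((1 * (1 - w * conj (a k)) - (w - a k) * (-(1 * conj (a k)))) /
            (1 - w * conj (a k)) ^ 2) w :=
        ((hasDerivAt_id w).sub_const _).div
          (((hasDerivAt_id w).mul_const _).const_sub 1) h2
      rw [logDeriv_apply, h3.deriv]
      have := hne k
      field_simp
      ring
    · intro k _
      exact div_ne_zero (hne k) (den_ne (ha k) hw)
    · intro k _
      have h2 := den_ne (ha k) hw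
      exact DifferentiableAt.div (by fun_prop) (by fun_prop) h2
  rw [← h1, logDeriv_apply, mul_div_cancel₀ _ hB]

/-! ### Potential, field and energy -/

/-- A radial profile: a continuous function of `x = |B|²` supported in `[x₁, x₂] ⊂ (0, 1)`. -/
structure Profile (e : ℝ → ℝ) (x₁ x₂ : ℝ) : Prop where
  cont : Continuous e
  pos : 0 < x₁
  lt_one : x₂ < 1
  low : ∀ x ≤ x₁, e x = 0
  high : ∀ x, x₂ ≤ x → e x = 0

open Classical in
/-- The potential `∫_{|B|²}^1 e` on the disk, extended by `0`. -/
noncomputable def pot {d : ℕ} (s : ℝ) (a : Fin d → ℂ) (e : ℝ → ℝ) (w : ℂ) : ℂ :=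
  if ‖w‖ < 1 then ((∫ x in (‖bl s a w‖ ^ 2)..1, e x : ℝ) : ℂ) else 0

open Classical in
/-- The field `-∂̄(pot)`, namely `e(|B|²) B \overline{B'}` on the disk and `0` elsewhere. -/
noncomputable def fld {d : ℕ} (s : ℝ) (a : Fin d → ℂ) (e : ℝ → ℝ) (w : ℂ) : ℂ :=
  if ‖w‖ < 1 then (e (‖bl s a w‖ ^ 2) : ℂ) * bl s a w * conj (deriv (bl s a) w) else 0

theorem pot_eventually_zero {d : ℕ} (s : ℝ) {a : Fin d → ℂ} (ha : ∀ k, ‖a k‖ < 1)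
    {e : ℝ → ℝ} {x₁ x₂ : ℝ} (he : Profile e x₁ x₂) {w : ℂ} (hw : 1 ≤ ‖w‖) :
    pot s a e =ᶠ[nhds w] fun _ => 0 := by
  have hint : ∀ x, x₂ ≤ x → ∫ y in x..1, e y = 0 := fun x hx => by
    rw [intervalIntegral.integral_congr (g := fun _ => 0), intervalIntegral.integral_zero]
    intro y hy
    apply he.high
    rcases Set.mem_uIcc.1 hy with h | h
    · linarith [h.1]
    · linarith [h.1, he.lt_one]
  rcases hw.eq_or_lt with h | h
  · have h1 : ContinuousAt (fun v => ‖bl s a v‖ ^ 2) w :=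
      ((bl_analyticAt s ha h.symm.le).continuousAt.norm).pow 2
    have h2 : ∀ᶠ v in nhds w, x₂ < ‖bl s a v‖ ^ 2 := by
      apply h1.eventually_const_lt
      simpa only [bl_circle s ha h.symm] using he.lt_one
    filter_upwards [h2] with v hv
    unfold pot
    split_ifs
    · rw [hint _ hv.le]; simp
    · rfl
  · filter_upwards [(isOpen_lt continuous_const continuous_norm).mem_nhds h] with v hv
    have : ¬ ‖v‖ < 1 := not_lt.2 (le_of_lt hv)
    simp [pot, this]

theorem pot_compact {d : ℕ} (s : ℝ) {a : Fin d → ℂ} {e : ℝ → ℝ} :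
    HasCompactSupport (pot s a e) := by
  apply HasCompactSupport.intro (isCompact_closedBall (0 : ℂ) 1)
  intro w hw
  have : ¬ ‖w‖ < 1 := fun h => hw (by simpa using h.le)
  simp [pot, this]

theorem pot_eventually_eq {d : ℕ} (s : ℝ) (a : Fin d → ℂ) (e : ℝ → ℝ) {w : ℂ} (hw : ‖w‖ < 1) :
    pot s a e =ᶠ[nhds w] fun v => ((∫ x in (‖bl s a v‖ ^ 2)..1, e x : ℝ) : ℂ) := by
  filter_upwards [(isOpen_lt continuous_norm continuous_const).mem_nhds hw] with v hv
  exact if_pos hv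

theorem hasDerivAt_prim {e : ℝ → ℝ} (he : Continuous e) (x : ℝ) :
    HasDerivAt (fun x => ∫ y in x..1, e y) (-e x) x :=
  intervalIntegral.integral_hasDerivAt_left (he.intervalIntegrable _ _)
    (he.stronglyMeasurableAtFilter _ _) he.continuousAt

theorem pot_contDiff {d : ℕ} (s : ℝ) {a : Fin d → ℂ} (ha : ∀ k, ‖a k‖ < 1)
    {e : ℝ → ℝ} {x₁ x₂ : ℝ} (he : Profile e x₁ x₂) : ContDiff ℝ 1 (pot s a e) := by
  rw [contDiff_iff_contDiffAt]
  intro w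
  by_cases hw : ‖w‖ < 1
  · refine ContDiffAt.congr_of_eventuallyEq ?_ (pot_eventually_eq s a e hw)
    have h1 : ContDiff ℝ 1 (fun x => ∫ y in x..1, e y) := by
      rw [contDiff_one_iff_deriv]
      refine ⟨fun x => (hasDerivAt_prim he.cont x).differentiableAt, ?_⟩
      rw [funext fun x => (hasDerivAt_prim he.cont x).deriv]
      exact he.cont.neg
    have h2 : ContDiffAt ℝ 1 (bl s a) w :=
      ((bl_analyticAt s ha hw.le).contDiffAt (n := 1)).restrict_scalars ℝ
    exact Complex.ofRealCLM.contDiff.contDiffAt.comp w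
      (h1.contDiffAt.comp w (h2.norm_sq ℝ))
  · exact contDiffAt_const.congr_of_eventuallyEq (pot_eventually_zero s ha he (not_lt.1 hw))

/-- `∂̄(pot) = -fld`, where `2 ∂̄ = ∂_x + i ∂_y`. -/
theorem pot_dbar {d : ℕ} (s : ℝ) {a : Fin d → ℂ} (ha : ∀ k, ‖a k‖ < 1)
    {e : ℝ → ℝ} {x₁ x₂ : ℝ} (he : Profile e x₁ x₂) (w : ℂ) :
    fderiv ℝ (pot s a e) w 1 + I * fderiv ℝ (pot s a e) w I = -2 * fld s a e w := by
  by_cases hw : ‖w‖ < 1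
  · have h1 : HasFDerivAt (bl s a) ((ContinuousLinearMap.toSpanSingleton ℂ (deriv (bl s a) w)).restrictScalars ℝ) w :=
      ((bl_analyticAt s ha hw.le).differentiableAt.hasDerivAt.hasFDerivAt).restrictScalars ℝ
    have h2 := h1.norm_sq
    have h3 := (hasDerivAt_prim he.cont (‖bl s a w‖ ^ 2)).comp_hasFDerivAt w h2
    have h4 := (Complex.ofRealCLM.hasFDerivAt).comp w h3
    have h5 := h4.congr_of_eventuallyEq (pot_eventually_eq s a e hw)
    rw [h5.fderiv]
    simp only [fld, if_pos hw]
    simp [Complex.inner]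
    apply Complex.ext <;> simp <;> ring
  · rw [(pot_eventually_zero s ha he (not_lt.1 hw)).fderiv_eq]
    simp [fld, hw]

theorem fld_cont {d : ℕ} (s : ℝ) {a : Fin d → ℂ} (ha : ∀ k, ‖a k‖ < 1)
    {e : ℝ → ℝ} {x₁ x₂ : ℝ} (he : Profile e x₁ x₂) : Continuous (fld s a e) := by
  have h : fld s a e = fun w => (-1 / 2 : ℂ) *
      (fderiv ℝ (pot s a e) w 1 + I * fderiv ℝ (pot s a e) w I) := by
    ext w; rw [pot_dbar s ha he]; ring
  have hc := (pot_contDiff s ha he).continuous_fderiv one_ne_zero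
  rw [h]
  fun_prop

theorem fld_compact {d : ℕ} (s : ℝ) (a : Fin d → ℂ) (e : ℝ → ℝ) :
    HasCompactSupport (fld s a e) := by
  apply HasCompactSupport.intro (isCompact_closedBall (0 : ℂ) 1)
  intro w hw
  have : ¬ ‖w‖ < 1 := fun h => hw (by simpa using h.le)
  simp [fld, this]

theorem fld_bdd {d : ℕ} (s : ℝ) {a : Fin d → ℂ} (ha : ∀ k, ‖a k‖ < 1)
    {e : ℝ → ℝ} {x₁ x₂ : ℝ} (he : Profile e x₁ x₂) : ∃ C, 0 ≤ C ∧ ∀ w, ‖fld s a e w‖ ≤ C := by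
  obtain ⟨C, hC⟩ := (fld_cont s ha he).bounded_above_of_compact_support (fld_compact s a e)
  exact ⟨C, (norm_nonneg _).trans (hC 0), hC⟩

/-- The Cauchy–Pompeiu formula for `pot`, which recovers it from its field. -/
theorem integral_fld {d : ℕ} (s : ℝ) {a : Fin d → ℂ} (ha : ∀ k, ‖a k‖ < 1)
    {e : ℝ → ℝ} {x₁ x₂ : ℝ} (he : Profile e x₁ x₂) (z : ℂ) :
    ∫ w, fld s a e w * (w - z)⁻¹ = Real.pi * pot s a e z := by
  have h := cauchy_pompeiu _ (pot_contDiff s ha he) (pot_compact s) z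
  simp_rw [pot_dbar s ha he] at h
  have h2 : ∀ w, fld s a e w * (w - z)⁻¹ = (-1 / 2 : ℂ) * (-2 * fld s a e w / (w - z)) := fun w => by
    rw [div_eq_mul_inv]; ring
  simp_rw [h2]
  rw [integral_const_mul, h]; ring

theorem integrable_fld {d : ℕ} (s : ℝ) {a : Fin d → ℂ} (ha : ∀ k, ‖a k‖ < 1)
    {e : ℝ → ℝ} {x₁ x₂ : ℝ} (he : Profile e x₁ x₂) (z : ℂ) :
    Integrable (fun w => fld s a e w * (w - z)⁻¹) := by
  obtain ⟨C, hC0, hC⟩ := fld_bdd s ha he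
  have h1 : IntegrableOn (fun w => fld s a e w * (w - z)⁻¹) (Metric.ball 0 1) := by
    have h2 := integrableOn_inv_sub z (Metric.ball 0 1) (by simp [Complex.volume_ball])
    refine Integrable.bdd_mul (c := C) ?_ (fld_cont s ha he).aestronglyMeasurable
      (Filter.Eventually.of_forall hC)
    refine h2.neg.congr (Filter.Eventually.of_forall fun w => ?_)
    simp only [Pi.neg_apply]
    rw [← inv_neg, neg_sub]
  rw [← integrableOn_univ]
  refine h1.of_forall_sdiff_eq_zero MeasurableSet.univ ?_
  rintro w ⟨-, hw⟩
  have : ¬ ‖w‖ < 1 := fun h => hw (by simpa using h)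
  simp [fld, this]

/-- The energy identity: `B` covers the disk `d` times, so the Dirichlet-type integral of a
function of `|B|²` is `d` times the one for `z ↦ z`. It follows from the Cauchy–Pompeiu formula at
the zeros and poles of `B`. -/
theorem energy {d : ℕ} (s : ℝ) {a : Fin d → ℂ} (ha : ∀ k, ‖a k‖ < 1)
    {e : ℝ → ℝ} {x₁ x₂ : ℝ} (he : Profile e x₁ x₂) :
    IntegrableOn (fun w => e (‖bl s a w‖ ^ 2) * ‖deriv (bl s a) w‖ ^ 2) (Metric.ball 0 1) ∧
    ∫ w in Metric.ball (0 : ℂ) 1, e (‖bl s a w‖ ^ 2) * ‖deriv (bl s a) w‖ ^ 2 =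
      Real.pi * d * ∫ x in (0 : ℝ)..1, e x := by
  have hz : ∀ k, bl s a (a k) = 0 := fun k => by
    rw [bl, Finset.prod_eq_zero (Finset.mem_univ k) (by rw [sub_self, zero_div]), mul_zero]
  -- The pole `1 / conj (a k)` lies outside the disk, where `pot` vanishes; it is absent if `a k = 0`.
  have hp1 : ∀ k, ∀ w, fld s a e w * (conj (a k) * (1 - w * conj (a k))⁻¹) =
      if a k = 0 then 0 else -(fld s a e w * (w - (conj (a k))⁻¹)⁻¹) := fun k w => by
    split_ifs with h
    · simp [h]
    · have h' : conj (a k) ≠ 0 := by simpa using h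
      have : 1 - w * conj (a k) = -(conj (a k) * (w - (conj (a k))⁻¹)) := by
        field_simp; ring
      rw [this, inv_neg, mul_inv, mul_neg, mul_inv_cancel_left₀ h', mul_neg]
  have hp : ∀ k, Integrable (fun w => fld s a e w * (conj (a k) * (1 - w * conj (a k))⁻¹)) ∧
      ∫ w, fld s a e w * (conj (a k) * (1 - w * conj (a k))⁻¹) = 0 := fun k => by
    simp_rw [hp1]
    split_ifs with h
    · simp
    · refine ⟨(integrable_fld s ha he _).neg, ?_⟩
      rw [integral_neg, integral_fld s ha he]
      have : ¬ ‖(conj (a k))⁻¹‖ < 1 := by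
        rw [not_lt, norm_inv, Complex.norm_conj]
        exact (one_le_inv₀ (norm_pos_iff.2 h)).2 (ha k).le
      rw [pot, if_neg this]; simp
  have hq : ∀ k, ∫ w, fld s a e w * (w - a k)⁻¹ = Real.pi * (∫ x in (0 : ℝ)..1, e x : ℝ) :=
    fun k => by rw [integral_fld s ha he, pot, if_pos (ha k), hz k]; simp
  have hk : ∀ k, Integrable (fun w => fld s a e w * ((w - a k)⁻¹ + conj (a k) * (1 - w * conj (a k))⁻¹)) ∧
      ∫ w, fld s a e w * ((w - a k)⁻¹ + conj (a k) * (1 - w * conj (a k))⁻¹) =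
        Real.pi * (∫ x in (0 : ℝ)..1, e x : ℝ) := fun k => by
    simp_rw [mul_add]
    refine ⟨(integrable_fld s ha he _).add (hp k).1, ?_⟩
    rw [integral_add (integrable_fld s ha he _) (hp k).1, hq, (hp k).2, add_zero]
  -- Summing over `k` turns the kernel into `B' / B`, and `fld * B' / B = e(|B|²) |B'|²`.
  have hpt : ∀ w ∈ Metric.ball (0 : ℂ) 1, ∑ k, fld s a e w * ((w - a k)⁻¹ + conj (a k) * (1 - w * conj (a k))⁻¹)
      = ((e (‖bl s a w‖ ^ 2) * ‖deriv (bl s a) w‖ ^ 2 : ℝ) : ℂ) := fun w hw => by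
    have hw' : ‖w‖ < 1 := by simpa using hw
    rw [← Finset.mul_sum]
    simp only [fld, if_pos hw']
    by_cases hB : bl s a w = 0
    · rw [hB]
      simp [he.low 0 he.pos.le]
    · have h1 := bl_logDeriv s ha hw'.le hB
      calc _ = (e (‖bl s a w‖ ^ 2) : ℂ) * (conj (deriv (bl s a) w) * (bl s a w * ∑ k, ((w - a k)⁻¹ + conj (a k) * (1 - w * conj (a k))⁻¹))) := by ring
        _ = _ := by
          rw [← h1, ← Complex.normSq_eq_conj_mul_self, Complex.normSq_eq_norm_sq]
          push_cast; rfl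
  have hs := integrable_finsetSum (μ := (volume : Measure ℂ)) Finset.univ (fun k _ => (hk k).1)
  have hI : IntegrableOn (fun w => ((e (‖bl s a w‖ ^ 2) * ‖deriv (bl s a) w‖ ^ 2 : ℝ) : ℂ)) (Metric.ball 0 1) :=
    hs.integrableOn.congr_fun hpt Metric.isOpen_ball.measurableSet
  refine ⟨hI.re, ?_⟩
  have h2 : ∫ w in Metric.ball (0 : ℂ) 1, ∑ k, fld s a e w * ((w - a k)⁻¹ + conj (a k) * (1 - w * conj (a k))⁻¹)
      = d * (Real.pi * (∫ x in (0 : ℝ)..1, e x : ℝ)) := by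
    rw [setIntegral_eq_integral_of_forall_compl_eq_zero, integral_finsetSum _ (fun k _ => (hk k).1)]
    · simp_rw [fun k => (hk k).2]; simp
    · intro w hw
      have : ¬ ‖w‖ < 1 := fun h => hw (by simpa using h)
      simp [fld, this]
  rw [setIntegral_congr_fun Metric.isOpen_ball.measurableSet hpt, integral_complex_ofReal] at h2
  have h3 := congrArg Complex.re h2
  rw [show (d : ℂ) * (Real.pi * (∫ x in (0 : ℝ)..1, e x : ℝ)) = ((d * (Real.pi * ∫ x in (0 : ℝ)..1, e x) : ℝ) : ℂ) by push_cast; rfl] at h3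
  rw [Complex.ofReal_re, Complex.ofReal_re] at h3
  rw [h3]; ring

/-! ### The flux inequality -/

theorem bl_measurable {d : ℕ} (s : ℝ) (a : Fin d → ℂ) : Measurable (bl s a) := by
  unfold bl; fun_prop

theorem measurableSet_bl {d : ℕ} (s : ℝ) (a : Fin d → ℂ) {T : Set ℝ} (hT : MeasurableSet T) :
    MeasurableSet {w : ℂ | ‖w‖ < 1 ∧ ‖bl s a w‖ ^ 2 ∈ T} :=
  (measurableSet_lt measurable_norm measurable_const).inter
    (((bl_measurable s a).norm.pow_const 2) hT)

theorem volume_disk_ne_top (P : ℂ → Prop) : volume {w : ℂ | ‖w‖ < 1 ∧ P w} ≠ ⊤ := by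
  have h : {w : ℂ | ‖w‖ < 1 ∧ P w} ⊆ Metric.ball 0 1 := fun w hw => by simpa using hw.1
  exact ((measure_mono h).trans_lt Metric.isBounded_ball.measure_lt_top).ne

/-- The flux inequality. The field is paired with the Cauchy transform of the sublevel set `E`,
which the Ahlfors–Beurling bound controls by `√(π|E|)`; the energy identity controls the field. -/
theorem flux_ineq {d : ℕ} (hd : 0 < d) (s : ℝ) {a : Fin d → ℂ} (ha : ∀ k, ‖a k‖ < 1)
    {e : ℝ → ℝ} {x₁ x₂ : ℝ} (he : Profile e x₁ x₂) (h0 : ∀ x, 0 ≤ e x) (h1 : ∀ x, x * e x ≤ 1) :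
    volume.real {w : ℂ | ‖w‖ < 1 ∧ ‖bl s a w‖ ^ 2 ∈ Set.Iio x₁} * (∫ x in (0 : ℝ)..1, e x) ≤
      d * volume.real {w : ℂ | ‖w‖ < 1 ∧ ‖bl s a w‖ ^ 2 ∈ Set.Ico x₁ x₂} := by
  set E := {w : ℂ | ‖w‖ < 1 ∧ ‖bl s a w‖ ^ 2 ∈ Set.Iio x₁} with hE
  set S := {w : ℂ | ‖w‖ < 1 ∧ ‖bl s a w‖ ^ 2 ∈ Set.Ico x₁ x₂} with hS
  set q := ∫ x in (0 : ℝ)..1, e x with hq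
  have hEm : MeasurableSet E := measurableSet_bl s a measurableSet_Iio
  have hSm : MeasurableSet S := measurableSet_bl s a measurableSet_Ico
  have hEt : volume E ≠ ⊤ := volume_disk_ne_top _
  have hSt : volume S ≠ ⊤ := volume_disk_ne_top _
  have hd' : (0 : ℝ) < d := by exact_mod_cast hd
  have hfc := fld_cont s ha he
  -- Fubini applies because the kernel is uniformly integrable on `E`.
  have hF : Integrable (Function.uncurry fun z w => fld s a e w * (w - z)⁻¹)
      ((volume.restrict E).prod volume) := by
    obtain ⟨C, hC, hb⟩ := lintegral_inv_sub_le
    have hm : Measurable (Function.uncurry fun z w : ℂ => fld s a e w * (w - z)⁻¹) :=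
      (hfc.measurable.comp measurable_snd).mul (measurable_snd.sub measurable_fst).inv
    refine ⟨hm.aestronglyMeasurable, ?_⟩
    unfold HasFiniteIntegral
    rw [lintegral_prod_symm' _ hm.enorm]
    have h2 : ∀ w, ∫⁻ z in E, ‖Function.uncurry (fun z w : ℂ => fld s a e w * (w - z)⁻¹) (z, w)‖ₑ
        ≤ ‖fld s a e w‖ₑ * (volume E + C) := fun w => by
      simp only [Function.uncurry_apply_pair, enorm_mul]
      rw [lintegral_const_mul' _ _ (by simp)]
      gcongr
      exact hb w E
    refine (lintegral_mono h2).trans_lt ?_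
    rw [lintegral_mul_const' _ _ (by simp [hEt, hC])]
    exact ENNReal.mul_lt_top
      (hfc.integrable_of_hasCompactSupport (fld_compact s a e)).hasFiniteIntegral
      (by simp [lt_top_iff_ne_top, hEt, hC])
  have hsw := integral_integral_swap hF
  have hL : ∫ z in E, ∫ w, fld s a e w * (w - z)⁻¹ = ((Real.pi * (volume.real E * q) : ℝ) : ℂ) := by
    have : ∀ z ∈ E, ∫ w, fld s a e w * (w - z)⁻¹ = ((Real.pi * q : ℝ) : ℂ) := fun z hz => by
      rw [integral_fld s ha he, pot, if_pos hz.1]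
      have h2 : ∫ x in (0 : ℝ)..(‖bl s a z‖ ^ 2), e x = 0 := by
        rw [intervalIntegral.integral_congr (g := fun _ => 0), intervalIntegral.integral_zero]
        intro y hy
        rw [Set.uIcc_of_le (by positivity)] at hy
        exact he.low y (hy.2.trans hz.2.le)
      have h3 := intervalIntegral.integral_add_adjacent_intervals (μ := volume)
        (he.cont.intervalIntegrable 0 (‖bl s a z‖ ^ 2)) (he.cont.intervalIntegrable _ 1)
      rw [h2, zero_add] at h3
      rw [h3]; push_cast; rfl
    rw [setIntegral_congr_fun hEm this, setIntegral_const]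
    rw [Complex.real_smul]; push_cast; ring
  have hM : ∀ w, ‖∫ z in E, fld s a e w * (w - z)⁻¹‖ ≤
      ‖fld s a e w‖ * Real.sqrt (Real.pi * volume.real E) := fun w => by
    rw [integral_const_mul, norm_mul]
    gcongr
    exact ahlfors_beurling w E hEt
  have he2 : Profile (fun x => x * e x ^ 2) x₁ x₂ :=
    ⟨by have := he.cont; fun_prop, he.pos, he.lt_one, fun x hx => by simp [he.low x hx],
      fun x hx => by simp [he.high x hx]⟩
  obtain ⟨hen1, hen2⟩ := energy s ha he2
  have hq2 : ∫ x in (0 : ℝ)..1, x * e x ^ 2 ≤ q := by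
    apply intervalIntegral.integral_mono_on zero_le_one (he2.cont.intervalIntegrable _ _)
      (he.cont.intervalIntegrable _ _)
    intro x hx
    nlinarith [h0 x, h1 x]
  set m := volume.real E with hm
  have hm0 : 0 ≤ m := measureReal_nonneg
  have hpt : ∀ w, ‖fld s a e w‖ * Real.sqrt (Real.pi * m) ≤
      (Metric.ball (0 : ℂ) 1).indicator (fun w => m / (2 * d) *
        ((fun x => x * e x ^ 2) (‖bl s a w‖ ^ 2) * ‖deriv (bl s a) w‖ ^ 2)) w +
      S.indicator (fun _ => Real.pi * d / 2) w := fun w => by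
    by_cases hw : ‖w‖ < 1
    · rw [Set.indicator_of_mem (by simpa using hw)]
      have hu : ‖fld s a e w‖ ^ 2 =
          ‖bl s a w‖ ^ 2 * e (‖bl s a w‖ ^ 2) ^ 2 * ‖deriv (bl s a) w‖ ^ 2 := by
        rw [fld, if_pos hw]
        simp only [norm_mul, Complex.norm_conj, Complex.norm_real, Real.norm_eq_abs, mul_pow,
          sq_abs]
        ring
      by_cases hwS : w ∈ S
      · rw [Set.indicator_of_mem hwS]
        simp only
        rw [← hu]
        have hs := Real.sq_sqrt (show 0 ≤ Real.pi * m by positivity)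
        set M := Real.sqrt (Real.pi * m)
        set u := ‖fld s a e w‖
        have : m = M ^ 2 / Real.pi := by rw [hs]; field_simp
        rw [this]
        -- Weighted AM–GM for `u * M`; the weight is the one for which `B = z ^ d` gives equality in the
        -- limit of thin shells.
        have h4 : M ^ 2 / Real.pi / (2 * d) * u ^ 2 + Real.pi * d / 2 - u * M =
            (M * u - Real.pi * d) ^ 2 / (2 * d * Real.pi) := by
          field_simp; ring
        have h5 : 0 ≤ (M * u - Real.pi * d) ^ 2 / (2 * d * Real.pi) := by positivity
        linarith
      · rw [Set.indicator_of_notMem hwS]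
        have : e (‖bl s a w‖ ^ 2) = 0 := by
          by_contra hne
          apply hwS
          refine ⟨hw, ?_, ?_⟩
          · by_contra h; exact hne (he.low _ (not_le.1 h).le)
          · by_contra h; exact hne (he.high _ (not_lt.1 h))
        simp [fld, this]
    · have h3 : w ∉ S := fun h => hw h.1
      rw [Set.indicator_of_notMem (by simpa using hw), Set.indicator_of_notMem h3]
      simp [fld, hw]
  have hi1 : Integrable ((Metric.ball (0 : ℂ) 1).indicator (fun w => m / (2 * d) *
        ((fun x => x * e x ^ 2) (‖bl s a w‖ ^ 2) * ‖deriv (bl s a) w‖ ^ 2))) :=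
    (integrable_indicator_iff Metric.isOpen_ball.measurableSet).2 (hen1.const_mul _)
  have hi2 : Integrable (S.indicator (fun _ => Real.pi * d / 2)) :=
    (integrable_indicator_iff hSm).2 (integrableOn_const hSt)
  have hfin : Real.pi * (m * q) ≤ m / (2 * d) * (Real.pi * d * q) + volume.real S * (Real.pi * d / 2) := by
    calc Real.pi * (m * q) ≤ ‖((Real.pi * (m * q) : ℝ) : ℂ)‖ := by
          rw [Complex.norm_real]; exact le_abs_self _
      _ = ‖∫ w, ∫ z in E, fld s a e w * (w - z)⁻¹‖ := by rw [← hL, hsw]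
      _ ≤ ∫ w, ((Metric.ball (0 : ℂ) 1).indicator (fun w => m / (2 * d) *
        ((fun x => x * e x ^ 2) (‖bl s a w‖ ^ 2) * ‖deriv (bl s a) w‖ ^ 2)) w +
        S.indicator (fun _ => Real.pi * d / 2) w) :=
          norm_integral_le_of_norm_le (hi1.add hi2)
            (Filter.Eventually.of_forall fun w => (hM w).trans (hpt w))
      _ = m / (2 * d) * (Real.pi * d * ∫ x in (0 : ℝ)..1, x * e x ^ 2) +
          volume.real S * (Real.pi * d / 2) := by
        rw [integral_add hi1 hi2, integral_indicator Metric.isOpen_ball.measurableSet,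
          integral_const_mul, hen2, integral_indicator hSm, setIntegral_const, smul_eq_mul]
      _ ≤ _ := by gcongr
  have h6 : m / (2 * d) * (Real.pi * d * q) = Real.pi * (m * q) / 2 := by field_simp
  rw [h6] at hfin
  nlinarith [Real.pi_pos]

/-! ### Growth of the area -/

/-- The product of `x⁻¹` and a trapezoidal cut-off equal to `1` on `[y₁, y₂]` and to `0` outside
`[x₁, x₂]`. -/
theorem exists_profile {x₁ y₁ y₂ x₂ : ℝ} (h0 : 0 < x₁) (h1 : x₁ < y₁) (h2 : y₁ < y₂)
    (h3 : y₂ < x₂) (h4 : x₂ < 1) : ∃ e : ℝ → ℝ, Profile e x₁ x₂ ∧ (∀ x, 0 ≤ e x) ∧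
      (∀ x, x * e x ≤ 1) ∧ (∀ x ∈ Set.Icc y₁ y₂, x * e x = 1) ∧
      Real.log (y₂ / y₁) ≤ ∫ x in (0 : ℝ)..1, e x := by
  set T : ℝ → ℝ := fun x => max 0 (min 1 (min ((x - x₁) / (y₁ - x₁)) ((x₂ - x) / (x₂ - y₂))))
    with hT
  have hT0 : ∀ x, 0 ≤ T x := fun x => le_max_left _ _
  have hT1 : ∀ x, T x ≤ 1 := fun x => max_le zero_le_one (min_le_left _ _)
  have ha : 0 < y₁ - x₁ := by linarith
  have hb : 0 < x₂ - y₂ := by linarith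
  have hm : ∀ x, 0 < max x x₁ := fun x => lt_max_of_lt_right h0
  have hTl : ∀ x ≤ x₁, T x = 0 := fun x hx => by
    have : (x - x₁) / (y₁ - x₁) ≤ 0 := div_nonpos_of_nonpos_of_nonneg (by linarith) ha.le
    exact max_eq_left (((min_le_right _ _).trans (min_le_left _ _)).trans this)
  have hTh : ∀ x, x₂ ≤ x → T x = 0 := fun x hx => by
    have : (x₂ - x) / (x₂ - y₂) ≤ 0 := div_nonpos_of_nonpos_of_nonneg (by linarith) hb.le
    exact max_eq_left (((min_le_right _ _).trans (min_le_right _ _)).trans this)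
  have hTm : ∀ x ∈ Set.Icc y₁ y₂, T x = 1 := fun x hx => by
    have e1 : 1 ≤ (x - x₁) / (y₁ - x₁) := by rw [le_div_iff₀ ha]; linarith [hx.1]
    have e2 : 1 ≤ (x₂ - x) / (x₂ - y₂) := by rw [le_div_iff₀ hb]; linarith [hx.2]
    simp only [hT]
    rw [min_eq_left (le_min e1 e2), max_eq_right zero_le_one]
  have hTc : Continuous T := by simp only [hT]; fun_prop
  have hc : Continuous fun x => T x / max x x₁ :=
    hTc.div (by fun_prop) fun x => (hm x).ne'
  have hn : ∀ x, 0 ≤ T x / max x x₁ := fun x => div_nonneg (hT0 x) (hm x).le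
  -- Dividing by `max x x₁` instead of `x` keeps continuity at `0`; `T` vanishes below `x₁`.
  refine ⟨fun x => T x / max x x₁, ⟨hc, h0, h4, fun x hx => by simp [hTl x hx],
    fun x hx => by simp [hTh x hx]⟩, hn, fun x => ?_, fun x hx => ?_, ?_⟩
  · rw [← mul_div_assoc, div_le_one (hm x)]
    by_cases hx : x ≤ x₁
    · rw [hTl x hx, mul_zero]; exact (hm x).le
    · have : 0 < x := by linarith
      exact (mul_le_of_le_one_right this.le (hT1 x)).trans (le_max_left _ _)
  · have : x₁ ≤ x := by linarith [hx.1]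
    simp only
    rw [hTm x hx, max_eq_left this, mul_one_div_cancel (by linarith [hx.1])]
  · have e1 : ∫ x in y₁..y₂, T x / max x x₁ = Real.log (y₂ / y₁) := by
      rw [← integral_inv_of_pos (by linarith) (by linarith)]
      apply intervalIntegral.integral_congr
      intro x hx
      rw [Set.uIcc_of_le h2.le] at hx
      have : x₁ ≤ x := by linarith [hx.1]
      simp only
      rw [hTm x hx, max_eq_left this, one_div]
    rw [← e1]
    exact intervalIntegral.integral_mono_interval (by linarith) h2.le (by linarith)
      (Filter.Eventually.of_forall hn) (hc.intervalIntegrable _ _)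

/-- The area of the sublevel set `{|B|² < x}` in the disk. -/
noncomputable def area {d : ℕ} (s : ℝ) (a : Fin d → ℂ) (x : ℝ) : ℝ :=
  volume.real {w : ℂ | ‖w‖ < 1 ∧ ‖bl s a w‖ ^ 2 ∈ Set.Iio x}

theorem area_nonneg {d : ℕ} (s : ℝ) (a : Fin d → ℂ) (x : ℝ) : 0 ≤ area s a x :=
  measureReal_nonneg

theorem area_mono {d : ℕ} (s : ℝ) (a : Fin d → ℂ) {x y : ℝ} (h : x ≤ y) :
    area s a x ≤ area s a y :=
  measureReal_mono (fun _ hw => ⟨hw.1, lt_of_lt_of_le hw.2 h⟩) (volume_disk_ne_top _)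

theorem area_Ico {d : ℕ} (s : ℝ) (a : Fin d → ℂ) {x y : ℝ} (h : x ≤ y) :
    volume.real {w : ℂ | ‖w‖ < 1 ∧ ‖bl s a w‖ ^ 2 ∈ Set.Ico x y} = area s a y - area s a x := by
  unfold area
  have hsub : {w : ℂ | ‖w‖ < 1 ∧ ‖bl s a w‖ ^ 2 ∈ Set.Iio x} ⊆
      {w : ℂ | ‖w‖ < 1 ∧ ‖bl s a w‖ ^ 2 ∈ Set.Iio y} :=
    fun w hw => ⟨hw.1, lt_of_lt_of_le hw.2 h⟩
  rw [← measureReal_sdiff hsub (measurableSet_bl s a measurableSet_Iio) (volume_disk_ne_top _)]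
  congr 1
  ext w
  simp only [Set.mem_ofPred_eq, Set.mem_Ico, Set.mem_sdiff, Set.mem_Iio, not_and, not_lt]
  tauto

/-- The flux inequality for profiles increasing to `x⁻¹` on `[x₁, x₂]`, whose integral tends to
`log (x₂ / x₁)`. -/
theorem area_growth {d : ℕ} (hd : 0 < d) (s : ℝ) {a : Fin d → ℂ} (ha : ∀ k, ‖a k‖ < 1)
    {x₁ x₂ : ℝ} (h1 : 0 < x₁) (h2 : x₁ < x₂) (h3 : x₂ ≤ 1) :
    area s a x₁ * Real.log (x₂ / x₁) ≤ d * (area s a x₂ - area s a x₁) := by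
  have hlim : Filter.Tendsto (fun η : ℝ => area s a x₁ * Real.log ((x₂ - η) / (x₁ + η)))
      (nhdsWithin 0 (Set.Ioi 0)) (nhds (area s a x₁ * Real.log (x₂ / x₁))) := by
    have : ContinuousAt (fun η : ℝ => area s a x₁ * Real.log ((x₂ - η) / (x₁ + η))) 0 := by
      refine continuousAt_const.mul (ContinuousAt.log (ContinuousAt.div (by fun_prop)
        (by fun_prop) (by simpa using h1.ne')) ?_)
      have : 0 < x₂ / x₁ := by apply div_pos <;> linarith
      simpa using ⟨by linarith, h1.ne'⟩
    have h := this.tendsto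
    simp only [sub_zero, add_zero] at h
    exact h.mono_left nhdsWithin_le_nhds
  refine le_of_tendsto hlim ?_
  have hev : ∀ᶠ η : ℝ in nhdsWithin 0 (Set.Ioi 0), η < (x₂ - x₁) / 2 :=
    nhdsWithin_le_nhds (Iio_mem_nhds (by linarith))
  filter_upwards [hev, self_mem_nhdsWithin] with η hη hη0
  have hη0' : 0 < η := hη0
  obtain ⟨e, he, he0, he1, -, hel⟩ := exists_profile (x₁ := x₁) (y₁ := x₁ + η) (y₂ := x₂ - η)
    (x₂ := x₂ - η / 2) h1 (by linarith) (by linarith) (by linarith) (by linarith)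
  have hf := flux_ineq hd s ha he he0 he1
  rw [area_Ico s a (by linarith)] at hf
  calc _ ≤ area s a x₁ * ∫ x in (0 : ℝ)..1, e x :=
        mul_le_mul_of_nonneg_left hel (area_nonneg s a x₁)
    _ ≤ _ := hf
    _ ≤ _ := by gcongr; exact area_mono s a (by linarith)

/-- Integrated form of the growth inequality: `x ↦ |{|B|² < x}| x^{-1/d}` is monotone. -/
theorem area_monotone {d : ℕ} (hd : 0 < d) (s : ℝ) {a : Fin d → ℂ} (ha : ∀ k, ‖a k‖ < 1)
    {x₁ x₂ : ℝ} (h1 : 0 < x₁) (h2 : x₁ < x₂) (h3 : x₂ ≤ 1) :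
    area s a x₁ * (x₂ / x₁) ^ ((1 : ℝ) / d) ≤ area s a x₂ := by
  have hd' : (0 : ℝ) < d := by exact_mod_cast hd
  set ℓ := Real.log (x₂ / x₁) with hℓ
  have hρ : 1 < x₂ / x₁ := (one_lt_div h1).2 h2
  have hℓ0 : 0 < ℓ := Real.log_pos hρ
  have hlim := (Real.tendsto_one_add_div_pow_exp (ℓ / d)).const_mul (area s a x₁)
  rw [show Real.exp (ℓ / d) = (x₂ / x₁) ^ ((1 : ℝ) / d) by
    rw [Real.rpow_def_of_pos (by linarith), ← hℓ]; ring_nf] at hlim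
  refine le_of_tendsto hlim ?_
  filter_upwards [Filter.eventually_gt_atTop 0] with n hn
  have hn' : (0 : ℝ) < n := by exact_mod_cast hn
  have hend : x₁ * Real.exp (ℓ / n * n) = x₂ := by
    rw [div_mul_cancel₀ _ hn'.ne', hℓ, Real.exp_log (by linarith)]; field_simp
  -- Growth over `n` steps with constant ratio `exp (ℓ / n)`, in the manner of compound interest.
  have hstep : ∀ j : ℕ, j ≤ n →
      area s a x₁ * (1 + ℓ / d / n) ^ j ≤ area s a (x₁ * Real.exp (ℓ / n * j)) := by
    intro j
    induction j with
    | zero => intro _; simp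
    | succ j ih =>
      intro hj
      have hj' : ((j + 1 : ℕ) : ℝ) ≤ n := by exact_mod_cast hj
      have hlt : x₁ * Real.exp (ℓ / n * j) < x₁ * Real.exp (ℓ / n * (j + 1 : ℕ)) := by
        have : 0 < ℓ / n := by positivity
        gcongr
        simp
      have hle : x₁ * Real.exp (ℓ / n * (j + 1 : ℕ)) ≤ 1 := by
        refine le_trans ?_ h3
        rw [← hend]
        gcongr
      have hg := area_growth hd s ha (by positivity) hlt hle
      have hlog : Real.log (x₁ * Real.exp (ℓ / n * (j + 1 : ℕ)) / (x₁ * Real.exp (ℓ / n * j)))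
          = ℓ / n := by
        rw [mul_div_mul_left _ _ h1.ne', ← Real.exp_sub, Real.log_exp]; push_cast; ring
      rw [hlog] at hg
      have h5 : area s a (x₁ * Real.exp (ℓ / n * j)) * (1 + ℓ / d / n) ≤
          area s a (x₁ * Real.exp (ℓ / n * (j + 1 : ℕ))) := by
        have h6 : area s a (x₁ * Real.exp (ℓ / n * j)) * (ℓ / d / n) =
          (area s a (x₁ * Real.exp (ℓ / n * j)) * (ℓ / n)) / d := by ring
        have h7 := (div_le_iff₀' hd').2 hg
        rw [mul_add, mul_one, h6]; linarith
      calc _ = (area s a x₁ * (1 + ℓ / d / n) ^ j) * (1 + ℓ / d / n) := by ring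
        _ ≤ _ := mul_le_mul_of_nonneg_right (ih (by omega)) (by positivity)
        _ ≤ _ := h5
  have := hstep n le_rfl
  rwa [hend] at this

/-- If equality holds at the level `x₀`, the superlevel sets above it are as small as those of
`z ↦ z ^ d`. -/
theorem superlevel_le {d : ℕ} (hd : 0 < d) (s : ℝ) {a : Fin d → ℂ} (ha : ∀ k, ‖a k‖ < 1)
    {x₀ x : ℝ} (h0 : 0 < x₀) (hA : area s a x₀ = Real.pi * x₀ ^ ((1 : ℝ) / d)) (h1 : x₀ < x)
    (h2 : x ≤ 1) :
    volume.real {w : ℂ | ‖w‖ < 1 ∧ ‖bl s a w‖ ^ 2 ∈ Set.Ico x 1} ≤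
      Real.pi / d * Real.log (1 / x) := by
  have hx : 0 < x := h0.trans h1
  have h3 := area_monotone hd s ha h0 h1 h2
  rw [hA, mul_assoc, ← Real.mul_rpow h0.le (by positivity), mul_div_cancel₀ _ h0.ne'] at h3
  have h4 : area s a 1 ≤ Real.pi := by
    have : volume.real (Metric.ball (0 : ℂ) 1) = Real.pi := by
      simp [Measure.real, Complex.volume_ball]
    rw [← this]
    exact measureReal_mono (fun w hw => by simpa using hw.1) Metric.isBounded_ball.measure_lt_top.ne
  rw [area_Ico s a h2]
  have h5 : 1 + Real.log x / d ≤ x ^ ((1 : ℝ) / d) := by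
    rw [Real.rpow_def_of_pos hx]
    have := Real.add_one_le_exp (Real.log x * (1 / d))
    rw [mul_one_div] at this ⊢
    linarith
  have h6 := mul_le_mul_of_nonneg_left h5 Real.pi_pos.le
  rw [one_div, Real.log_inv]
  have h7 : Real.pi / d * -Real.log x = - (Real.pi * (Real.log x / d)) := by ring
  rw [h7]
  linarith

/-! ### The defect -/

/-- The pointwise defect: at a point `w ≠ 0` with `B(w) ≠ 0` it vanishes
exactly when `w B'(w) = d B(w)`. -/
noncomputable def defect {d : ℕ} (s : ℝ) (a : Fin d → ℂ) (w : ℂ) : ℝ :=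
  ‖w⁻¹ - deriv (bl s a) w / (d * bl s a w)‖ ^ 2

/-- Upper bound for the weighted integral of the defect over a thin shell. Expanding the square, the
cross term and the term with `|B'|²` are computed exactly by the Cauchy–Pompeiu formula at `0` and by
the energy identity; the term with `|w|⁻²` is at most the area of the shell up to a factor
`1 + O(δ)`. -/
theorem defect_upper {d : ℕ} (hd : 0 < d) (s : ℝ) {a : Fin d → ℂ} (ha : ∀ k, ‖a k‖ < 1)
    {c : ℝ} (hc0 : 0 < c) (hc1 : c ≤ 1)
    (hB : ∀ w : ℂ, ‖w‖ < 1 → ‖bl s a w‖ ^ 2 ≤ 1 - c * (1 - ‖w‖))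
    {δ : ℝ} (hδ0 : 0 < δ) (hδ : δ ≤ c / 4) {e : ℝ → ℝ} {x₂ : ℝ} (he : Profile e (1 - δ) x₂)
    (h0 : ∀ x, 0 ≤ e x) (h1 : ∀ x, x * e x ≤ 1) :
    IntegrableOn (fun w => ‖bl s a w‖ ^ 2 * e (‖bl s a w‖ ^ 2) * defect s a w)
      (Metric.ball 0 1) ∧
    ∫ w in Metric.ball (0 : ℂ) 1, ‖bl s a w‖ ^ 2 * e (‖bl s a w‖ ^ 2) * defect s a w ≤
      (1 + 6 * δ / c) * volume.real {w : ℂ | ‖w‖ < 1 ∧ ‖bl s a w‖ ^ 2 ∈ Set.Ico (1 - δ) 1} -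
        Real.pi * (∫ x in (0 : ℝ)..1, e x) / d := by
  set S := {w : ℂ | ‖w‖ < 1 ∧ ‖bl s a w‖ ^ 2 ∈ Set.Ico (1 - δ) 1} with hS
  set q := ∫ x in (0 : ℝ)..1, e x with hq
  have hd' : (0 : ℝ) < d := by exact_mod_cast hd
  have hd2 : (d : ℂ) ≠ 0 := by exact_mod_cast hd.ne'
  have hSm : MeasurableSet S := measurableSet_bl s a measurableSet_Ico
  have hSt : volume S ≠ ⊤ := volume_disk_ne_top _
  obtain ⟨hen1, hen2⟩ := energy s ha he
  have hfi : IntegrableOn (fun w => (fld s a e w * (w - 0)⁻¹).re) (Metric.ball 0 1) :=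
    (integrable_fld s ha he 0).integrableOn.re
  have hfe : ∫ w in Metric.ball (0 : ℂ) 1, (fld s a e w * (w - 0)⁻¹).re = Real.pi * q := by
    have h2 := integral_fld s ha he 0
    -- Here `|B(0)|² ≤ 1 - c ≤ 1 - δ`, so the origin lies below the support of `e`.
    have h3 : pot s a e 0 = (q : ℂ) := by
      rw [pot, if_pos (by simp)]
      have hB0 := hB 0 (by simp)
      simp only [norm_zero, sub_zero, mul_one] at hB0
      have h2 : ∫ x in (0 : ℝ)..(‖bl s a 0‖ ^ 2), e x = 0 := by
        rw [intervalIntegral.integral_congr (g := fun _ => 0), intervalIntegral.integral_zero]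
        intro y hy
        rw [Set.uIcc_of_le (by positivity)] at hy
        exact he.low y (hy.2.trans (by linarith))
      have h3 := intervalIntegral.integral_add_adjacent_intervals (μ := volume)
        (he.cont.intervalIntegrable 0 (‖bl s a 0‖ ^ 2)) (he.cont.intervalIntegrable _ 1)
      rw [h2, zero_add] at h3
      rw [h3]
    rw [h3] at h2
    have h4 : ∫ w in Metric.ball (0 : ℂ) 1, (fld s a e w * (w - 0)⁻¹) = ((Real.pi * q : ℝ) : ℂ) := by
      rw [setIntegral_eq_integral_of_forall_compl_eq_zero, h2]
      · push_cast; rfl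
      · intro w hw
        have : ¬ ‖w‖ < 1 := fun h => hw (by simpa using h)
        simp [fld, this]
    have h5 := integral_re (𝕜 := ℂ) (integrable_fld s ha he 0).integrableOn
      (μ := volume.restrict (Metric.ball (0 : ℂ) 1))
    simp only [RCLike.re_to_complex] at h5
    rw [h5, h4, Complex.ofReal_re]
  have hmeas : Measurable fun w => ‖bl s a w‖ ^ 2 * e (‖bl s a w‖ ^ 2) * ‖w⁻¹‖ ^ 2 := by
    have h2 := (bl_measurable s a).norm.pow_const 2
    exact (h2.mul (he.cont.measurable.comp h2)).mul (measurable_inv.norm.pow_const 2)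
  have hpt : ∀ w ∈ Metric.ball (0 : ℂ) 1,
      ‖bl s a w‖ ^ 2 * e (‖bl s a w‖ ^ 2) * ‖w⁻¹‖ ^ 2 ≤ S.indicator (fun _ => 1 + 6 * δ / c) w := by
    intro w hw
    have hw : ‖w‖ < 1 := by simpa using hw
    by_cases hwS : w ∈ S
    · rw [Set.indicator_of_mem hwS]
      have h2 := hB w hw
      have h3 : 1 - δ ≤ ‖bl s a w‖ ^ 2 := hwS.2.1
      set u := δ / c with hu
      have hu0 : 0 < u := by positivity
      have hu4 : u ≤ 1 / 4 := by rw [hu, div_le_iff₀ hc0]; linarith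
      have h4 : 1 - u ≤ ‖w‖ := by
        have : c * u = δ := by rw [hu]; field_simp
        by_contra h
        push Not at h
        nlinarith
      have h5 : ‖w⁻¹‖ ^ 2 ≤ 1 + 6 * u := by
        have : 0 < ‖w‖ := by linarith
        rw [norm_inv, inv_pow, inv_le_iff_one_le_mul₀ (by positivity)]
        calc (1 : ℝ) ≤ (1 + 6 * u) * (1 - u) ^ 2 := by
              nlinarith [mul_pos hu0 hu0, mul_nonneg hu0.le (mul_nonneg (sub_nonneg.2 hu4) (sub_nonneg.2 hu4))]
          _ ≤ _ := by gcongr; linarith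
      rw [mul_div_assoc]
      calc _ ≤ 1 * ‖w⁻¹‖ ^ 2 := by gcongr; exact h1 _
        _ ≤ _ := by rw [one_mul]; exact h5
    · rw [Set.indicator_of_notMem hwS]
      have : e (‖bl s a w‖ ^ 2) = 0 := by
        by_contra hne
        apply hwS
        refine ⟨hw, ?_, ?_⟩
        · by_contra h; exact hne (he.low _ (not_le.1 h).le)
        · by_contra h; exact hne (he.high _ (he.lt_one.le.trans (not_lt.1 h)))
      simp [this]
  have hSi : Integrable (S.indicator (fun _ => 1 + 6 * δ / c)) :=
    (integrable_indicator_iff hSm).2 (integrableOn_const hSt)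
  have hki : IntegrableOn (fun w => ‖bl s a w‖ ^ 2 * e (‖bl s a w‖ ^ 2) * ‖w⁻¹‖ ^ 2)
      (Metric.ball 0 1) := by
    refine hSi.integrableOn.mono' hmeas.aestronglyMeasurable ?_
    rw [ae_restrict_iff' Metric.isOpen_ball.measurableSet]
    refine Filter.Eventually.of_forall fun w hw => ?_
    rw [Real.norm_of_nonneg (mul_nonneg (mul_nonneg (by positivity) (h0 _)) (by positivity))]
    exact hpt w hw
  have hid : ∀ w ∈ Metric.ball (0 : ℂ) 1,
      ‖bl s a w‖ ^ 2 * e (‖bl s a w‖ ^ 2) * ‖w⁻¹‖ ^ 2 - 2 / d * (fld s a e w * (w - 0)⁻¹).re +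
        1 / d ^ 2 * (e (‖bl s a w‖ ^ 2) * ‖deriv (bl s a) w‖ ^ 2) =
      ‖bl s a w‖ ^ 2 * e (‖bl s a w‖ ^ 2) * defect s a w := by
    intro w hw
    have hw' : ‖w‖ < 1 := by simpa using hw
    rw [fld, if_pos hw', defect, sub_zero]
    by_cases hb : bl s a w = 0
    · rw [hb]; simp [he.low 0 he.pos.le]
    · set b := bl s a w
      set b' := deriv (bl s a) w
      have hbn : ‖b‖ ≠ 0 := by simpa using hb
      have e1 : ‖w⁻¹ - b' / (d * b)‖ ^ 2 = ‖w⁻¹‖ ^ 2 - 2 * (w⁻¹ * conj (b' / (d * b))).re +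
          ‖b' / (d * b)‖ ^ 2 := by
        simp only [← Complex.normSq_eq_norm_sq]
        rw [Complex.normSq_sub]; ring
      have e2 : w⁻¹ * conj (b' / (d * b)) = ((1 / (d * ‖b‖ ^ 2) : ℝ) : ℂ) * (b * conj b' * w⁻¹) := by
        have : ((‖b‖ : ℝ) : ℂ) ^ 2 = b * conj b := by
          rw [Complex.mul_conj, Complex.normSq_eq_norm_sq]; push_cast; rfl
        push_cast
        rw [this, map_div₀, map_mul, Complex.conj_natCast]
        have : conj b ≠ 0 := by simpa using hb
        field_simp
      have e3 : ((e (‖b‖ ^ 2) : ℂ) * b * conj b' * w⁻¹).re = e (‖b‖ ^ 2) * (b * conj b' * w⁻¹).re := by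
        rw [← Complex.re_ofReal_mul]; congr 1; ring
      rw [e1, e2, e3, Complex.re_ofReal_mul, norm_div, norm_mul, Complex.norm_natCast]
      field_simp
  have hI := (hki.sub (hfi.const_mul (2 / (d : ℝ)))).add (hen1.const_mul (1 / (d : ℝ) ^ 2))
  refine ⟨IntegrableOn.congr_fun hI hid Metric.isOpen_ball.measurableSet, ?_⟩
  have h5 : ∫ w in Metric.ball (0 : ℂ) 1, ‖bl s a w‖ ^ 2 * e (‖bl s a w‖ ^ 2) * defect s a w =
      (∫ w in Metric.ball (0 : ℂ) 1, ‖bl s a w‖ ^ 2 * e (‖bl s a w‖ ^ 2) * ‖w⁻¹‖ ^ 2) -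
        2 / d * (Real.pi * q) + 1 / d ^ 2 * (Real.pi * d * q) := by
    rw [← setIntegral_congr_fun Metric.isOpen_ball.measurableSet hid, hq, ← hen2, ← hq, ← hfe,
      ← integral_const_mul, ← integral_const_mul, ← integral_sub hki (hfi.const_mul (2 / (d : ℝ)))]
    exact integral_add (hki.sub (hfi.const_mul (2 / (d : ℝ)))) (hen1.const_mul (1 / (d : ℝ) ^ 2))
  have h6 : ∫ w in Metric.ball (0 : ℂ) 1, ‖bl s a w‖ ^ 2 * e (‖bl s a w‖ ^ 2) * ‖w⁻¹‖ ^ 2 ≤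
      (1 + 6 * δ / c) * volume.real S := by
    refine (setIntegral_mono_on hki hSi.integrableOn Metric.isOpen_ball.measurableSet hpt).trans ?_
    rw [setIntegral_eq_integral_of_forall_compl_eq_zero, integral_indicator hSm, setIntegral_const,
      smul_eq_mul, mul_comm]
    intro w hw
    exact Set.indicator_of_notMem (fun h => hw (by simpa using h.1)) _
  have h7 : 1 / (d : ℝ) ^ 2 * (Real.pi * d * q) = Real.pi * q / d := by field_simp
  have h8 : 2 / (d : ℝ) * (Real.pi * q) = 2 * (Real.pi * q / d) := by ring
  rw [h5, h7, h8]
  linarith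

/-! ### Rigidity near the circle -/

/-- The part of the cone of opening `ε` around the direction `ζ` in the disk of radius `r`. -/
def cone (ζ : ℂ) (ε r : ℝ) : Set ℂ := {w | ‖w‖ < r ∧ ‖w - ‖w‖ * ζ‖ < ε * ‖w‖}

theorem cone_isOpen (ζ : ℂ) (ε r : ℝ) : IsOpen (cone ζ ε r) := by
  have h1 : IsOpen {w : ℂ | ‖w‖ < r} := isOpen_lt continuous_norm continuous_const
  have h2 : IsOpen {w : ℂ | ‖w - ‖w‖ * ζ‖ < ε * ‖w‖} := isOpen_lt (by fun_prop) (by fun_prop)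
  exact h1.inter h2

theorem cone_volume_ne_top (ζ : ℂ) (ε r : ℝ) : volume (cone ζ ε r) ≠ ⊤ := by
  have h : cone ζ ε r ⊆ Metric.ball 0 r := fun w hw => by simpa using hw.1
  exact ((measure_mono h).trans_lt Metric.isBounded_ball.measure_lt_top).ne

theorem cone_pos {ζ : ℂ} (hζ : ‖ζ‖ = 1) {ε : ℝ} (hε : 0 < ε) : 0 < volume.real (cone ζ ε 1) := by
  refine ENNReal.toReal_pos ?_ (cone_volume_ne_top _ _ _)
  refine ((cone_isOpen ζ ε 1).measure_pos volume ⟨ζ / 2, ?_, ?_⟩).ne'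
  · rw [norm_div, hζ]; norm_num
  · rw [norm_div, hζ]
    have : ζ / 2 - ((1 / ‖(2 : ℂ)‖ : ℝ) : ℂ) * ζ = 0 := by simp; ring
    rw [this]; simpa using hε

open scoped Pointwise in
theorem cone_scale (ζ : ℂ) (ε : ℝ) {r : ℝ} (hr : 0 < r) :
    volume.real (cone ζ ε r) = r ^ 2 * volume.real (cone ζ ε 1) := by
  have h : cone ζ ε r = r • cone ζ ε 1 := by
    ext w
    rw [Set.mem_smul_set_iff_inv_smul_mem₀ hr.ne']
    have h1 : ‖r⁻¹ • w‖ = r⁻¹ * ‖w‖ := by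
      rw [norm_smul, Real.norm_of_nonneg (by positivity)]
    have h2 : ‖r⁻¹ • w - ((r⁻¹ * ‖w‖ : ℝ) : ℂ) * ζ‖ = r⁻¹ * ‖w - ‖w‖ * ζ‖ := by
      have h3 : r⁻¹ • w - ((r⁻¹ * ‖w‖ : ℝ) : ℂ) * ζ = r⁻¹ • (w - ‖w‖ * ζ) := by
        rw [Complex.real_smul, Complex.real_smul]; push_cast; ring
      rw [h3, norm_smul, Real.norm_of_nonneg (by positivity)]
    simp only [cone, Set.mem_ofPred_eq, h1, h2]
    have hr' : 0 < r⁻¹ := by positivity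
    rw [show ε * (r⁻¹ * ‖w‖) = r⁻¹ * (ε * ‖w‖) by ring, mul_lt_mul_iff_right₀ hr',
      inv_mul_lt_iff₀ hr, mul_one]
  rw [h, Measure.real, Measure.addHaar_smul]
  simp [Complex.finrank_real_complex, Measure.real, sq_nonneg]

theorem defect_continuousAt {d : ℕ} (hd : 0 < d) (s : ℝ) {a : Fin d → ℂ} (ha : ∀ k, ‖a k‖ < 1)
    {ζ : ℂ} (hζ : ‖ζ‖ = 1) : ContinuousAt (defect s a) ζ := by
  have h1 := bl_analyticAt s ha hζ.le
  have h2 : bl s a ζ ≠ 0 := fun h => by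
    have := bl_circle s ha hζ
    rw [h] at this; simp at this
  have h3 : ζ ≠ 0 := fun h => by rw [h] at hζ; simp at hζ
  have h4 : (d : ℂ) ≠ 0 := by exact_mod_cast hd.ne'
  exact (((continuousAt_inv₀ h3).sub (h1.deriv.continuousAt.div
    (continuousAt_const.mul h1.continuousAt) (mul_ne_zero h4 h2))).norm).pow 2

/-- If equality holds at the level `x₀`, then the defect, weighted by the profile of a thin shell
`{1 - δ ≤ |B|² < 1}` above that level, integrates to `O(δ²)`. The profile cuts off margins of width
`δ²` only, so that its integral is `log (1 / (1 - δ)) - O(δ²)`. -/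
theorem shell_upper {d : ℕ} (hd : 0 < d) (s : ℝ) {a : Fin d → ℂ} (ha : ∀ k, ‖a k‖ < 1)
    {x₀ : ℝ} (h0 : 0 < x₀) (hA : area s a x₀ = Real.pi * x₀ ^ ((1 : ℝ) / d))
    {c : ℝ} (hc0 : 0 < c) (hc1 : c ≤ 1)
    (hcB : ∀ w : ℂ, ‖w‖ < 1 → ‖bl s a w‖ ^ 2 ≤ 1 - c * (1 - ‖w‖))
    {δ : ℝ} (hδ0 : 0 < δ) (hδc : δ ≤ c / 4) (hδx : δ < 1 - x₀) :
    ∃ e : ℝ → ℝ, (∀ x, 0 ≤ e x) ∧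
      (∀ x ∈ Set.Icc (1 - δ + δ ^ 2) (1 - δ ^ 2), x * e x = 1) ∧
      IntegrableOn (fun w => ‖bl s a w‖ ^ 2 * e (‖bl s a w‖ ^ 2) * defect s a w)
        (Metric.ball 0 1) ∧
      ∫ w in Metric.ball (0 : ℂ) 1, ‖bl s a w‖ ^ 2 * e (‖bl s a w‖ ^ 2) * defect s a w ≤
        Real.pi / d * (12 / c + 4) * δ ^ 2 := by
  have hd' : (0 : ℝ) < d := by exact_mod_cast hd
  have hδ4 : δ ≤ 1 / 4 := by linarith
  have hδ2 : δ ^ 2 ≤ δ / 4 := by nlinarith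
  obtain ⟨e, he, he0, he1, hem, hel⟩ := exists_profile (x₁ := 1 - δ) (y₁ := 1 - δ + δ ^ 2)
    (y₂ := 1 - δ ^ 2) (x₂ := 1 - δ ^ 2 / 2) (by linarith) (by nlinarith) (by nlinarith)
    (by nlinarith) (by nlinarith)
  obtain ⟨hint, hup⟩ := defect_upper hd s ha hc0 hc1 hcB hδ0 hδc he he0 he1
  have hsup := superlevel_le hd s ha h0 hA (x := 1 - δ) (by linarith) (by linarith)
  set L := Real.log (1 / (1 - δ)) with hL
  have hL2 : L ≤ 2 * δ := by
    rw [hL]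
    refine (Real.log_le_sub_one_of_pos (by apply one_div_pos.2; linarith)).trans ?_
    rw [sub_le_iff_le_add, div_le_iff₀ (by linarith)]
    nlinarith
  have hq : L - 4 * δ ^ 2 ≤ ∫ x in (0 : ℝ)..1, e x := by
    refine le_trans ?_ hel
    rw [hL]
    have h2 : 0 < 1 - δ := by linarith
    have h3 : 0 < 1 - δ ^ 2 := by nlinarith
    have h4 : 0 < 1 - δ + δ ^ 2 := by nlinarith
    have h5 : 1 / (1 - δ) / ((1 - δ ^ 2) / (1 - δ + δ ^ 2)) ≤ 1 + 4 * δ ^ 2 := by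
      rw [div_div_eq_mul_div, div_le_iff₀ h3, one_div, inv_mul_le_iff₀ h2]
      nlinarith [mul_pos hδ0 hδ0, mul_nonneg (sq_nonneg δ) (sub_nonneg.2 hδ4), mul_nonneg (sq_nonneg δ) (sub_nonneg.2 hδ2)]
    have h6 := (Real.log_le_sub_one_of_pos
      (show 0 < 1 / (1 - δ) / ((1 - δ ^ 2) / (1 - δ + δ ^ 2)) by positivity)).trans
      (sub_le_sub_right h5 1)
    rw [Real.log_div (by positivity) (by positivity)] at h6
    linarith
  refine ⟨e, he0, hem, hint, hup.trans ?_⟩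
  have h2 : (1 + 6 * δ / c) * volume.real {w : ℂ | ‖w‖ < 1 ∧
      ‖bl s a w‖ ^ 2 ∈ Set.Ico (1 - δ) 1} ≤ (1 + 6 * δ / c) * (Real.pi / d * L) := by
    gcongr
  have h3 : Real.pi / d * (L - 4 * δ ^ 2) ≤ Real.pi * (∫ x in (0 : ℝ)..1, e x) / d := by
    rw [mul_div_right_comm]; gcongr
  have h4 : (1 + 6 * δ / c) * (Real.pi / d * L) - Real.pi / d * (L - 4 * δ ^ 2) =
      Real.pi / d * (6 * δ / c * L + 4 * δ ^ 2) := by ring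
  have h5 : Real.pi / d * (6 * δ / c * L + 4 * δ ^ 2) ≤
      Real.pi / d * (6 * δ / c * (2 * δ) + 4 * δ ^ 2) := by gcongr
  have h6 : Real.pi / d * (6 * δ / c * (2 * δ) + 4 * δ ^ 2) =
      Real.pi / d * (12 / c + 4) * δ ^ 2 := by ring
  linarith

/-- If the defect exceeds `g` near `ζ`, its weighted integral over the shell is at least of
order `δ`. -/
theorem shell_lower {d : ℕ} (s : ℝ) {a : Fin d → ℂ} {ζ : ℂ} (hζ : ‖ζ‖ = 1) {g ε : ℝ}
    (hg0 : 0 < g) (hεg : ∀ w, ‖w - ζ‖ < ε → g < defect s a w)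
    {c : ℝ} (hc0 : 0 < c) (hc1 : c ≤ 1)
    (hcB : ∀ w : ℂ, ‖w‖ < 1 → ‖bl s a w‖ ^ 2 ≤ 1 - c * (1 - ‖w‖))
    {C : ℝ} (hC1 : 1 ≤ C) (hCB : ∀ w : ℂ, ‖w‖ < 1 → 1 - C * (1 - ‖w‖) ≤ ‖bl s a w‖ ^ 2)
    {δ : ℝ} (hδ0 : 0 < δ) (hδc : δ ≤ c / 4) (hδε : δ < ε) (hδC : δ < c / (2 * C))
    {e : ℝ → ℝ} (he0 : ∀ x, 0 ≤ e x)
    (hem : ∀ x ∈ Set.Icc (1 - δ + δ ^ 2) (1 - δ ^ 2), x * e x = 1)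
    (hint : IntegrableOn (fun w => ‖bl s a w‖ ^ 2 * e (‖bl s a w‖ ^ 2) * defect s a w)
      (Metric.ball 0 1)) :
    g * (volume.real (cone ζ (ε / 2) 1) * (δ / (2 * C) - δ ^ 2 / c)) ≤
      ∫ w in Metric.ball (0 : ℂ) 1, ‖bl s a w‖ ^ 2 * e (‖bl s a w‖ ^ 2) * defect s a w := by
  have hδ4 : δ ≤ 1 / 4 := by linarith
  have hδ2 : δ ^ 2 ≤ δ / 4 := by nlinarith
  set V := volume.real (cone ζ (ε / 2) 1) with hV
  have hV0 : 0 ≤ V := measureReal_nonneg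
  -- For `|w|` between these radii, `|B|²` lies in `[1 - δ + δ², 1 - δ²]`, where the weight is `1`.
  set r₁ := 1 - δ / (2 * C) with hr₁
  set r₂ := 1 - δ ^ 2 / c with hr₂
  have hC2 : δ / (2 * C) ≤ δ / 2 := by gcongr; linarith
  have hlt : δ ^ 2 / c < δ / (2 * C) := by
    rw [div_lt_div_iff₀ hc0 (by positivity)]
    rw [lt_div_iff₀ (by positivity)] at hδC
    nlinarith
  have hr12 : r₁ < r₂ := by linarith
  have hr1 : 1 / 2 < r₁ := by linarith
  have hr2 : r₂ < 1 := by
    have : 0 < δ ^ 2 / c := by positivity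
    linarith
  set R := cone ζ (ε / 2) r₂ \ cone ζ (ε / 2) r₁ with hR
  have hRm : MeasurableSet R :=
    (cone_isOpen _ _ _).measurableSet.diff (cone_isOpen _ _ _).measurableSet
  have hRb : R ⊆ Metric.ball 0 1 := fun w hw => by
    have := hw.1.1
    simpa using this.trans hr2
  have hRv : volume.real R = (r₂ ^ 2 - r₁ ^ 2) * V := by
    rw [hR, measureReal_sdiff _ (cone_isOpen _ _ _).measurableSet (cone_volume_ne_top _ _ _),
      cone_scale ζ (ε / 2) (r := r₂) (by linarith), cone_scale ζ (ε / 2) (r := r₁) (by linarith),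
      ← hV]
    · ring
    · exact fun w hw => ⟨hw.1.trans hr12, hw.2⟩
  have hRp : ∀ w ∈ R, g ≤ ‖bl s a w‖ ^ 2 * e (‖bl s a w‖ ^ 2) * defect s a w := by
    intro w hw
    have hw1 : ‖w‖ < r₂ := hw.1.1
    have hw2 : r₁ ≤ ‖w‖ := by
      by_contra h
      exact hw.2 ⟨not_le.1 h, hw.1.2⟩
    have hw3 : ‖w‖ < 1 := hw1.trans hr2
    have hk : ‖bl s a w‖ ^ 2 * e (‖bl s a w‖ ^ 2) = 1 := by
      refine hem _ ⟨?_, ?_⟩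
      · have h2 := hCB w hw3
        have h3 : C * (1 - ‖w‖) ≤ C * (δ / (2 * C)) := by gcongr; linarith
        have h4 : C * (δ / (2 * C)) = δ / 2 := by field_simp
        linarith
      · have h2 := hcB w hw3
        have h3 : c * (δ ^ 2 / c) ≤ c * (1 - ‖w‖) := by gcongr; linarith
        have h4 : c * (δ ^ 2 / c) = δ ^ 2 := by field_simp
        linarith
    rw [hk, one_mul]
    refine (hεg w ?_).le
    calc ‖w - ζ‖ ≤ ‖w - ‖w‖ * ζ‖ + ‖‖w‖ * ζ - ζ‖ := norm_sub_le_norm_sub_add_norm_sub _ _ _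
      _ = ‖w - ‖w‖ * ζ‖ + (1 - ‖w‖) := by
        congr 1
        rw [← sub_one_mul, norm_mul, hζ, mul_one, ← Complex.ofReal_one, ← Complex.ofReal_sub,
          Complex.norm_real, Real.norm_eq_abs, abs_sub_comm, abs_of_pos (by linarith)]
      _ < ε := by nlinarith [hw.1.2]
  have hsq : δ / (2 * C) - δ ^ 2 / c ≤ r₂ ^ 2 - r₁ ^ 2 := by
    nlinarith [mul_nonneg (sub_nonneg.2 hr12.le) (show 0 ≤ r₁ + r₂ - 1 by linarith)]
  calc g * (V * (δ / (2 * C) - δ ^ 2 / c)) ≤ g * (V * (r₂ ^ 2 - r₁ ^ 2)) :=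
        mul_le_mul_of_nonneg_left (mul_le_mul_of_nonneg_left hsq hV0) hg0.le
    _ = ∫ w in R, g := by rw [setIntegral_const, hRv, smul_eq_mul]; ring
    _ ≤ ∫ w in R, ‖bl s a w‖ ^ 2 * e (‖bl s a w‖ ^ 2) * defect s a w :=
        setIntegral_mono_on (integrableOn_const (measure_ne_top_of_subset Set.sdiff_subset
          (cone_volume_ne_top _ _ _))) (hint.mono_set hRb) hRm hRp
    _ ≤ _ := setIntegral_mono_set hint (Filter.Eventually.of_forall fun w =>
        mul_nonneg (mul_nonneg (sq_nonneg _) (he0 _)) (sq_nonneg _)) hRb.eventuallyLE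

/-- Rigidity near the circle. In the shell `{1 - δ ≤ |B|² < 1}` the weighted defect integrates to
`O(δ²)`, while the shell has width of order `δ`; hence the defect vanishes on the circle. -/
theorem defect_circle {d : ℕ} (hd : 0 < d) (s : ℝ) {a : Fin d → ℂ} (ha : ∀ k, ‖a k‖ < 1)
    {x₀ : ℝ} (h0 : 0 < x₀) (h1 : x₀ < 1) (hA : area s a x₀ = Real.pi * x₀ ^ ((1 : ℝ) / d))
    {ζ : ℂ} (hζ : ‖ζ‖ = 1) : defect s a ζ = 0 := by
  by_contra hne
  have hd' : (0 : ℝ) < d := by exact_mod_cast hd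
  have hpos : 0 < defect s a ζ := lt_of_le_of_ne (sq_nonneg _) (Ne.symm hne)
  set g := defect s a ζ / 2 with hg
  have hg0 : 0 < g := by positivity
  obtain ⟨ε, hε, hεg⟩ : ∃ ε > 0, ∀ w, ‖w - ζ‖ < ε → g < defect s a w := by
    have := (defect_continuousAt hd s ha hζ).eventually_const_lt
      (show g < defect s a ζ by rw [hg]; linarith)
    obtain ⟨ε, hε, h⟩ := Metric.eventually_nhds_iff.1 this
    exact ⟨ε, hε, fun w hw => h (by rwa [dist_eq_norm])⟩
  obtain ⟨c, hc0, hc1, hcB⟩ := bl_upper hd s ha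
  obtain ⟨C, hC1, hCB⟩ := bl_lower s ha
  set V := volume.real (cone ζ (ε / 2) 1) with hV
  have hV0 : 0 < V := cone_pos hζ (by positivity)
  have main : ∀ δ : ℝ, 0 < δ → δ ≤ c / 4 → δ < 1 - x₀ → δ < ε → δ < c / (2 * C) →
      g * (V * (δ / (2 * C) - δ ^ 2 / c)) ≤ Real.pi / d * (12 / c + 4) * δ ^ 2 := by
    intro δ hδ0 hδc hδx hδε hδC
    obtain ⟨e, he0, hem, hint, hup⟩ := shell_upper hd s ha h0 hA hc0 hc1 hcB hδ0 hδc hδx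
    exact (shell_lower s hζ hg0 hεg hc0 hc1 hcB hC1 hCB hδ0 hδc hδε hδC he0 hem hint).trans hup
  -- The bounds read `η δ ≤ K δ²`, which fails for `δ < η / K`.
  set K := Real.pi / d * (12 / c + 4) + g * V / c with hK
  have hK0 : 0 < K := by positivity
  set η := g * V / (2 * C) with hη
  have hη0 : 0 < η := by positivity
  obtain ⟨δ, hδ0, hδ⟩ : ∃ δ, 0 < δ ∧ δ < min (c / 4) (min (1 - x₀) (min ε (min (c / (2 * C)) (η / K)))) := by
    apply exists_between
    have : 0 < 1 - x₀ := by linarith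
    positivity
  simp only [lt_min_iff] at hδ
  obtain ⟨h2, h3, h4, h5, h6⟩ := hδ
  have h7 := main δ hδ0 h2.le h3 h4 h5
  rw [lt_div_iff₀ hK0] at h6
  have h8 : g * (V * (δ / (2 * C) - δ ^ 2 / c)) = δ * η - g * V / c * δ ^ 2 := by
    rw [hη]; ring
  have h9 : δ * (δ * K) < δ * η := by gcongr
  have h10 : δ * (δ * K) = Real.pi / d * (12 / c + 4) * δ ^ 2 + g * V / c * δ ^ 2 := by
    rw [hK]; ring
  linarith

/-! ### The equality case -/

/-- If `w B'(w) = d B(w)` on the disk, then `B` is `d`-homogeneous along rays; as `|B| = 1` on the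
circle, `B` has no zero away from the origin. -/
theorem zeros_eq_zero {d : ℕ} (hd : 0 < d) (s : ℝ) {a : Fin d → ℂ} (ha : ∀ k, ‖a k‖ < 1)
    (hdef : ∀ ζ : ℂ, ‖ζ‖ = 1 → defect s a ζ = 0) : ∀ k, a k = 0 := by
  have hd2 : (d : ℂ) ≠ 0 := by exact_mod_cast hd.ne'
  have hdiff : DiffContOnCl ℂ (fun w => w * deriv (bl s a) w) (Metric.ball (0 : ℂ) 1) := by
    refine DifferentiableOn.diffContOnCl fun w hw => ?_
    rw [closure_ball _ one_ne_zero, mem_closedBall_zero_iff] at hw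
    exact (differentiableAt_fun_id.mul
      (bl_analyticAt s ha hw).deriv.differentiableAt).differentiableWithinAt
  have hdiff2 : DiffContOnCl ℂ (fun w => d * bl s a w) (Metric.ball (0 : ℂ) 1) := by
    refine DifferentiableOn.diffContOnCl fun w hw => ?_
    rw [closure_ball _ one_ne_zero, mem_closedBall_zero_iff] at hw
    exact ((bl_analyticAt s ha hw).differentiableAt.const_mul _).differentiableWithinAt
  have hode : ∀ w : ℂ, ‖w‖ ≤ 1 → w * deriv (bl s a) w = d * bl s a w := by
    intro w hw
    refine Complex.eqOn_closure_of_eqOn_frontier Metric.isBounded_ball hdiff hdiff2 ?_ (x := w) ?_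
    · intro ζ hζ
      rw [frontier_ball _ one_ne_zero, mem_sphere_zero_iff_norm] at hζ
      have h2 : bl s a ζ ≠ 0 := fun h => by
        have := bl_circle s ha hζ
        rw [h] at this; simp at this
      have h3 : ζ ≠ 0 := fun h => by rw [h] at hζ; simp at hζ
      have h4 := hdef ζ hζ
      rw [defect, sq_eq_zero_iff, norm_eq_zero, sub_eq_zero] at h4
      field_simp at h4
      simp only
      rw [← h4]
    · rw [closure_ball _ one_ne_zero]; simpa using hw
  intro k
  by_contra hk
  have hk' : 0 < ‖a k‖ := norm_pos_iff.2 hk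
  have hlt : 1 < ‖a k‖⁻¹ := (one_lt_inv₀ hk').2 (ha k)
  -- Along the ray through `a k`, the quotient `B(r a k) / r ^ d` is constant.
  set φ : ℝ → ℂ := fun r => bl s a (r * a k) * ((r : ℂ) ^ d)⁻¹ with hφ
  have hder : ∀ r ∈ Set.Icc 1 ‖a k‖⁻¹, HasDerivAt φ 0 r := by
    intro r hr
    have hr0 : (0 : ℝ) < r := by linarith [hr.1]
    have hrc : (r : ℂ) ≠ 0 := by exact_mod_cast hr0.ne'
    have hn : ‖(r : ℂ) * a k‖ ≤ 1 := by
      rw [norm_mul, Complex.norm_real, Real.norm_of_nonneg hr0.le]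
      calc _ ≤ ‖a k‖⁻¹ * ‖a k‖ := by gcongr; exact hr.2
        _ = 1 := inv_mul_cancel₀ hk'.ne'
    have h0 : HasDerivAt (fun z : ℂ => z * a k) (a k) (r : ℂ) := by
      simpa using (hasDerivAt_id (r : ℂ)).mul_const (a k)
    have h1 : HasDerivAt (fun z : ℂ => bl s a (z * a k)) (deriv (bl s a) (r * a k) * a k) (r : ℂ) :=
      HasDerivAt.comp (h₂ := bl s a) (h := fun z => z * a k) (r : ℂ)
        (bl_analyticAt s ha hn).differentiableAt.hasDerivAt h0
    have h2 := (h1.mul ((hasDerivAt_pow d (r : ℂ)).inv (pow_ne_zero d hrc))).comp_ofReal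
    refine h2.congr_deriv ?_
    have h3 := hode _ hn
    obtain ⟨n, rfl⟩ : ∃ n, d = n + 1 := ⟨d - 1, by omega⟩
    simp only [Nat.add_sub_cancel, pow_succ] at h3 ⊢
    simp only [Pi.inv_apply]
    field_simp
    linear_combination h3
  have hconst := (convex_Icc (1 : ℝ) ‖a k‖⁻¹).is_const_of_fderivWithin_eq_zero (𝕜 := ℝ) (f := φ)
    (fun r hr => (hder r hr).differentiableAt.differentiableWithinAt) (fun r hr => ?_)
    (Set.left_mem_Icc.2 hlt.le) (Set.right_mem_Icc.2 hlt.le)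
  · have hz : bl s a (a k) = 0 := by
      rw [bl, Finset.prod_eq_zero (Finset.mem_univ k) (by rw [sub_self, zero_div]), mul_zero]
    have h1 : φ 1 = 0 := by simp [hφ, hz]
    have hn : ‖((‖a k‖⁻¹ : ℝ) : ℂ) * a k‖ = 1 := by
      rw [norm_mul, Complex.norm_real, norm_inv, norm_norm, inv_mul_cancel₀ hk'.ne']
    have h2 := bl_circle s ha hn
    rw [h1] at hconst
    have h3 : (((‖a k‖⁻¹ : ℝ) : ℂ) ^ d)⁻¹ ≠ 0 := by
      simp [hk]
    have h4 : bl s a (((‖a k‖⁻¹ : ℝ) : ℂ) * a k) = 0 :=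
      (mul_eq_zero.1 hconst.symm).resolve_right h3
    rw [h4] at h2
    simp at h2
  · have := (hder r hr).hasDerivWithinAt (s := Set.Icc 1 ‖a k‖⁻¹)
    rw [this.hasFDerivWithinAt.fderivWithin (uniqueDiffOn_Icc hlt r hr)]
    ext; simp

theorem volume_pow_lt {d : ℕ} (hd : 0 < d) {t : ℝ} (ht : t ∈ Set.Icc (0 : ℝ) 1) :
    volume {z : ℂ | ‖z‖ < 1 ∧ ‖z‖ ^ d < t} = ENNReal.ofReal (Real.pi * t ^ ((2 : ℝ) / d)) := by
  have hd' : (0 : ℝ) < d := by exact_mod_cast hd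
  have h : {z : ℂ | ‖z‖ < 1 ∧ ‖z‖ ^ d < t} = Metric.ball 0 (t ^ ((1 : ℝ) / d)) := by
    ext z
    simp only [Set.mem_ofPred_eq, mem_ball_zero_iff]
    have h1 : ‖z‖ ^ d < t ↔ ‖z‖ < t ^ ((1 : ℝ) / d) := by
      rw [one_div, Real.lt_rpow_inv_iff_of_pos (norm_nonneg _) ht.1 hd', Real.rpow_natCast]
    rw [h1]
    have h2 : t ^ ((1 : ℝ) / d) ≤ 1 := Real.rpow_le_one ht.1 ht.2 (by positivity)
    exact ⟨fun h => h.2, fun h => ⟨h.trans_le h2, h⟩⟩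
  have h0 : 0 ≤ t ^ ((1 : ℝ) / d) := Real.rpow_nonneg ht.1 _
  rw [h, Complex.volume_ball, ← ENNReal.ofReal_pow h0, mul_comm Real.pi,
    ENNReal.ofReal_mul (Real.rpow_nonneg ht.1 _)]
  congr 1
  · rw [← Real.rpow_natCast, ← Real.rpow_mul ht.1]
    congr 2; push_cast; ring
  · rw [← NNReal.coe_real_pi, ENNReal.ofReal_coe_nnreal]

theorem blaschke_sublevel_equality_case (d : ℕ) (hd : 0 < d) (s : ℝ) (a : Fin d → ℂ)
    (ha : ∀ k, ‖a k‖ < 1) (t : ℝ) (ht : t ∈ Set.Ioo (0:ℝ) 1)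
    (heq : volume {z : ℂ | ‖z‖ < 1 ∧
        ‖Complex.exp (Complex.I * s) * ∏ k, (z - a k) / (1 - z * conj (a k))‖ < t} =
      ENNReal.ofReal (Real.pi * t ^ ((2:ℝ) / d))) :
    (∀ k, a k = 0) ∧
    (∀ z : ℂ, Complex.exp (Complex.I * s) * ∏ k, (z - a k) / (1 - z * conj (a k)) =
      Complex.exp (Complex.I * s) * z ^ d) ∧
    ∀ t' ∈ Set.Icc (0:ℝ) 1,
      volume {z : ℂ | ‖z‖ < 1 ∧
          ‖Complex.exp (Complex.I * s) * ∏ k, (z - a k) / (1 - z * conj (a k))‖ < t'} =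
        ENNReal.ofReal (Real.pi * t' ^ ((2:ℝ) / d)) := by
  have hA : area s a (t ^ 2) = Real.pi * (t ^ 2) ^ ((1 : ℝ) / d) := by
    have h1 : {w : ℂ | ‖w‖ < 1 ∧ ‖bl s a w‖ ^ 2 ∈ Set.Iio (t ^ 2)} =
        {w : ℂ | ‖w‖ < 1 ∧ ‖bl s a w‖ < t} := by
      ext w
      simp only [Set.mem_ofPred_eq, Set.mem_Iio]
      rw [pow_lt_pow_iff_left₀ (norm_nonneg _) ht.1.le two_ne_zero]
    rw [area, h1, Measure.real]
    unfold bl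
    rw [heq, ENNReal.toReal_ofReal (mul_nonneg Real.pi_pos.le (Real.rpow_nonneg ht.1.le _)),
      ← Real.rpow_natCast, ← Real.rpow_mul ht.1.le]
    congr 2; push_cast; ring
  have hz : ∀ k, a k = 0 := zeros_eq_zero hd s ha fun ζ hζ =>
    defect_circle hd s ha (pow_pos ht.1 2) (pow_lt_one₀ ht.1.le ht.2 two_ne_zero) hA hζ
  have hB : ∀ z : ℂ, Complex.exp (Complex.I * s) * ∏ k, (z - a k) / (1 - z * conj (a k)) =
      Complex.exp (Complex.I * s) * z ^ d := fun z => by simp [hz]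
  refine ⟨hz, hB, fun t' ht' => ?_⟩
  simp only [hB]
  rw [← volume_pow_lt hd ht']
  congr 1
  ext z
  rw [Set.mem_ofPred_eq, Set.mem_ofPred_eq, norm_mul, mul_comm Complex.I,
    Complex.norm_exp_ofReal_mul_I, one_mul, norm_pow]
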